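/- arXiv:2307.02366 — 13 statements merged into one kernel-verified Lean document; each statement's English description precedes it below -/
import Mathlib

section
/- Let f be a periodic sequence in Z_m and let h be the additive order of tr f in Z_m. Then the period of Σf equals h·τ(f). -/
/-- The shift operator `θ`: `θ f n = f (n+1)`. -/
def shiftSeq {M : ℕ} (f : ℕ → ZMod M) : ℕ → ZMod M := fun n => f (n + 1)

/-- The difference operator `Δ = θ - id`: `Δ f n = f (n+1) - f n`. -/
def deltaSeq {M : ℕ} (f : ℕ → ZMod M) : ℕ → ZMod M := fun n => f (n + 1) - f n

/-- A sequence is periodic if `θ^j f = f` for some `j ≥ 1`. -/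
def IsPeriodicSeq {M : ℕ} (f : ℕ → ZMod M) : Prop := ∃ j, 1 ≤ j ∧ Function.Periodic f j

/-- The period `τ(f)`: the least `j ≥ 1` with `θ^j f = f`. -/
noncomputable def perSeq {M : ℕ} (f : ℕ → ZMod M) : ℕ :=
  sInf {j | 1 ≤ j ∧ Function.Periodic f j}

/-- The trace `tr f = ∑_{i=0}^{τ(f)-1} f i`. -/
noncomputable def trSeq {M : ℕ} (f : ℕ → ZMod M) : ZMod M :=
  ∑ i ∈ Finset.range (perSeq f), f i

/-- The sum operator `Σ`: `Σf(0) = 0`, `Σf(n) = f(n-1) + Σf(n-1)`. -/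
def sigmaSeq {M : ℕ} (f : ℕ → ZMod M) : ℕ → ZMod M
  | 0 => 0
  | n + 1 => f n + sigmaSeq f n

/-- A sequence is nilpotent if `Δ^η f = 0` for some `η ≥ 1`. -/
def IsNilpotentSeq {M : ℕ} (f : ℕ → ZMod M) : Prop := ∃ η, 1 ≤ η ∧ deltaSeq^[η] f = 0

/-- A sequence is idempotent if `Δ^η f = f` for some `η ≥ 1`. -/
def IsIdempotentSeq {M : ℕ} (f : ℕ → ZMod M) : Prop := ∃ η, 1 ≤ η ∧ deltaSeq^[η] f = f

/-- The nilpotency index: the least `η ≥ 1` with `Δ^η f = 0`. -/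
noncomputable def nilIndex {M : ℕ} (f : ℕ → ZMod M) : ℕ :=
  sInf {η | 1 ≤ η ∧ deltaSeq^[η] f = 0}

/-- The idempotency index: the least `η ≥ 1` with `Δ^η f = f`. -/
noncomputable def idemIndex {M : ℕ} (f : ℕ → ZMod M) : ℕ :=
  sInf {η | 1 ≤ η ∧ deltaSeq^[η] f = f}

/-- The `p`-adic valuation on `ZMod M`, with `ν(0) = ∞`. -/
noncomputable def nuVal (p : ℕ) {M : ℕ} (a : ZMod M) : ℕ∞ :=
  if a = 0 then ⊤ else (padicValNat p a.val : ℕ∞)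

/-- `Double(f, q^t)`: repeat `q` times each successive `q^t`-subsequence of `f`. -/
def DoubleSeq {M : ℕ} (f : ℕ → ZMod M) (q t : ℕ) : ℕ → ZMod M :=
  fun n => f ((n / q ^ (t + 1)) * q ^ t + n % q ^ t)

/-- `Alt(f, q^t)`: alternate `(q-1)q^t` zeros with the successive `q^t`-subsequences of `f`. -/
def AltSeq {M : ℕ} (f : ℕ → ZMod M) (q t : ℕ) : ℕ → ZMod M :=
  fun n => if (n / q ^ t) % q = q - 1 then f ((n / q ^ (t + 1)) * q ^ t + n % q ^ t) else 0

/-- The binomial sequence `bin_s(n) = C(n,s) mod p^ℓ`. -/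
def binSeq (p l : ℕ) (s : ℕ) : ℕ → ZMod (p ^ l) := fun n => (n.choose s : ZMod (p ^ l))

/-- `f ≡_ν g`: zeros coincide, and valuations of nonzero values coincide. -/
def nuEquiv (p : ℕ) {M : ℕ} (f g : ℕ → ZMod M) : Prop :=
  ∀ n, (f n = 0 ↔ g n = 0) ∧ (f n ≠ 0 → padicValNat p (f n).val = padicValNat p (g n).val)

/-- `Π_i(f)`: number of entries of valuation `i` in one period of `f`. -/
noncomputable def PiCount (p : ℕ) {M : ℕ} (i : ℕ) (f : ℕ → ZMod M) : ℕ :=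
  ((Finset.range (perSeq f)).filter fun x => f x ≠ 0 ∧ padicValNat p (f x).val = i).card

/-- `Z(f)`: number of zero entries in one period of `f`. -/
noncomputable def ZCount {M : ℕ} (f : ℕ → ZMod M) : ℕ :=
  ((Finset.range (perSeq f)).filter fun x => f x = 0).card

/-- The `j`-th base-`p` digit of `x`. -/
def dig (p x j : ℕ) : ℕ := x / p ^ j % p

/-- If `f` is a periodic sequence in `Z_m` and `h` is the additive order of
`tr f` in `Z_m`, then `τ(Σf) = h · τ(f)`. -/
theorem stmt0 (m : ℕ) (hm : 2 ≤ m) (f : ℕ → ZMod m) (hf : IsPeriodicSeq f)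
    (h : ℕ) (hh : h = addOrderOf (trSeq f)) :
    perSeq (sigmaSeq f) = h * perSeq f := by
  have hS : ∀ n, sigmaSeq f n = ∑ i ∈ Finset.range n, f i := by
    intro n
    induction n with
    | zero => simp [sigmaSeq]
    | succ k ih => rw [sigmaSeq, Finset.sum_range_succ, ih, add_comm]
  obtain ⟨hT1, hT⟩ : 1 ≤ perSeq f ∧ Function.Periodic f (perSeq f) := Nat.sInf_mem hf
  have hmin : ∀ j, 1 ≤ j → Function.Periodic f j → perSeq f ≤ j :=
    fun j h1 h2 => Nat.sInf_le ⟨h1, h2⟩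
  have htr : trSeq f = sigmaSeq f (perSeq f) := (hS _).symm
  generalize perSeq f = T at *
  have hstep : ∀ n, sigmaSeq f (n + T) = sigmaSeq f n + trSeq f := by
    intro n
    induction n with
    | zero => simp [htr, sigmaSeq]
    | succ k ih =>
      rw [show k + 1 + T = (k + T) + 1 by ring, sigmaSeq, sigmaSeq, ih, hT k, add_assoc]
  have hk : ∀ k n, sigmaSeq f (n + k * T) = sigmaSeq f n + k • trSeq f := by
    intro k n
    induction k with
    | zero => simp
    | succ k ih =>
      rw [show n + (k + 1) * T = (n + k * T) + T by ring, hstep, ih, succ_nsmul, add_assoc]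
  have hhpos : 1 ≤ h := by
    have : NeZero m := ⟨by omega⟩
    rw [hh]
    exact addOrderOf_pos _
  have hmem : 1 ≤ h * T ∧ Function.Periodic (sigmaSeq f) (h * T) := by
    refine ⟨Nat.mul_pos hhpos hT1, fun n => ?_⟩
    rw [hk, hh, addOrderOf_nsmul_eq_zero, add_zero]
  apply le_antisymm (Nat.sInf_le hmem)
  change h * T ≤ perSeq (sigmaSeq f)
  obtain ⟨hj1, hj⟩ : 1 ≤ perSeq (sigmaSeq f) ∧
      Function.Periodic (sigmaSeq f) (perSeq (sigmaSeq f)) :=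
    Nat.sInf_mem (s := {j | 1 ≤ j ∧ Function.Periodic (sigmaSeq f) j}) ⟨_, hmem⟩
  generalize perSeq (sigmaSeq f) = j at *
  have hfj : Function.Periodic f j := by
    intro n
    have h1 := hj (n + 1)
    rw [show n + 1 + j = (n + j) + 1 by ring, sigmaSeq, sigmaSeq, hj n] at h1
    exact add_right_cancel h1
  have hmod : Function.Periodic f (j % T) := by
    intro n
    have h2 : f (n + j % T + (j / T) * T) = f (n + j % T) := by
      have := hT.nat_mul (j / T) (n + j % T)
      simpa using this
    rw [← h2, add_assoc, Nat.mod_add_div']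
    exact hfj n
  have hdvd : j % T = 0 := by
    by_contra h0
    have h3 := hmin _ (Nat.one_le_iff_ne_zero.mpr h0) hmod
    have h4 := Nat.mod_lt j hT1
    omega
  obtain ⟨k, rfl⟩ := Nat.dvd_of_mod_eq_zero hdvd
  have h5 := hj 0
  rw [mul_comm T k, hk] at h5
  have h6 : k • trSeq f = 0 := by simpa using h5
  have h7 : h ∣ k := hh ▸ addOrderOf_dvd_of_nsmul_eq_zero h6
  have h8 : 0 < k := Nat.pos_of_ne_zero (by rintro rfl; simp at hj1)
  rw [mul_comm T k]
  exact Nat.mul_le_mul_right T (Nat.le_of_dvd h8 h7)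
end

section
/- Every periodic sequence f in Z_m admits a unique decomposition f = f_I + f_N where f_I is idempotent and f_N is nilpotent; moreover τ(f) = lcm(τ(f_I), τ(f_N)). -/
/-- Delta as a linear endomorphism. -/
def dLin (m : ℕ) : Module.End (ZMod m) (ℕ → ZMod m) where
  toFun := deltaSeq
  map_add' f g := by funext n; simp only [deltaSeq, Pi.add_apply]; ring
  map_smul' c f := by
    funext n; simp only [deltaSeq, Pi.smul_apply, smul_eq_mul, RingHom.id_apply]; ring

lemma dLin_pow {m : ℕ} (k : ℕ) (f : ℕ → ZMod m) : deltaSeq^[k] f = (dLin m ^ k) f := by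
  rw [Module.End.pow_apply]; rfl

lemma periodic_dLin {m : ℕ} {f : ℕ → ZMod m} {c : ℕ} (h : Function.Periodic f c) (k : ℕ) :
    Function.Periodic ((dLin m ^ k) f) c := by
  rw [← dLin_pow]
  induction k with
  | zero => simpa using h
  | succ k ih =>
    rw [Function.iterate_succ_apply']
    intro x
    have h1 := ih (x + 1)
    have h2 := ih x
    simp only [deltaSeq]
    rw [h2, ← h1, show x + c + 1 = x + 1 + c by ring]

lemma perSeq_spec {m : ℕ} {f : ℕ → ZMod m} (hf : IsPeriodicSeq f) :
    1 ≤ perSeq f ∧ Function.Periodic f (perSeq f) :=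
  Nat.sInf_mem (s := {j | 1 ≤ j ∧ Function.Periodic f j}) hf

lemma periodic_iff_dvd {m : ℕ} {f : ℕ → ZMod m} (hf : IsPeriodicSeq f) (c : ℕ) :
    Function.Periodic f c ↔ perSeq f ∣ c := by
  obtain ⟨h1, h2⟩ := perSeq_spec hf
  constructor
  · intro h
    have h3 : Function.Periodic f (c % perSeq f) := by
      intro x
      have h4 := (h2.nat_mul (c / perSeq f)) (x + c % perSeq f)
      rw [← h4, ← h x]
      congr 1
      have := Nat.mod_add_div c (perSeq f)
      rw [Nat.cast_id, add_assoc, mul_comm, this]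
    by_contra hd
    have h5 : 1 ≤ c % perSeq f := by
      rw [Nat.dvd_iff_mod_eq_zero] at hd; omega
    have h6 : perSeq f ≤ c % perSeq f := Nat.sInf_le ⟨h5, h3⟩
    have := Nat.mod_lt c (show perSeq f > 0 by omega)
    omega
  · rintro ⟨k, rfl⟩
    have := h2.nat_mul k
    rw [mul_comm]; simpa using this

lemma exists_coll {m : ℕ} (hm : 2 ≤ m) {f : ℕ → ZMod m} (hf : IsPeriodicSeq f) :
    ∃ a b, a < b ∧ (dLin m ^ a) f = (dLin m ^ b) f := by
  obtain ⟨j, hj, hp⟩ := hf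
  haveI : NeZero m := ⟨by omega⟩
  obtain ⟨a, b, hab, h⟩ := Finite.exists_ne_map_eq_of_infinite
    (fun k : ℕ => fun i : Fin j => (dLin m ^ k) f i)
  have key : (dLin m ^ a) f = (dLin m ^ b) f := by
    funext n
    rw [← (periodic_dLin hp a).map_mod_nat n, ← (periodic_dLin hp b).map_mod_nat n]
    exact congrFun h ⟨n % j, Nat.mod_lt _ hj⟩
  rcases lt_or_gt_of_ne hab with h | h
  · exact ⟨a, b, h, key⟩
  · exact ⟨b, a, h, key.symm⟩

lemma pow_fix {m : ℕ} {h : ℕ → ZMod m} {N : ℕ} (hN : (dLin m ^ N) h = h) (k : ℕ) :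
    (dLin m ^ (N * k)) h = h := by
  induction k with
  | zero => simp
  | succ k ih => rw [Nat.mul_succ, pow_add, Module.End.mul_apply, hN, ih]

lemma pow_zero_le {m : ℕ} {h : ℕ → ZMod m} {N K : ℕ} (hN : (dLin m ^ N) h = 0) (hK : N ≤ K) :
    (dLin m ^ K) h = 0 := by
  obtain ⟨r, rfl⟩ := Nat.exists_eq_add_of_le' hK
  rw [pow_add, Module.End.mul_apply, hN, map_zero]

/-- every periodic sequence `f` in `Z_m` decomposes uniquely as
`f = f_I + f_N` with `f_I` idempotent and `f_N` nilpotent, and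
`τ(f) = lcm(τ(f_I), τ(f_N))`. -/
theorem stmt1 (m : ℕ) (hm : 2 ≤ m) (f : ℕ → ZMod m) (hf : IsPeriodicSeq f) :
    ∃ fI fN : ℕ → ZMod m,
      IsPeriodicSeq fI ∧ IsPeriodicSeq fN ∧ IsIdempotentSeq fI ∧ IsNilpotentSeq fN ∧
      f = fI + fN ∧ perSeq f = Nat.lcm (perSeq fI) (perSeq fN) ∧
      ∀ gI gN : ℕ → ZMod m, IsPeriodicSeq gI → IsPeriodicSeq gN →
        IsIdempotentSeq gI → IsNilpotentSeq gN → f = gI + gN → gI = fI ∧ gN = fN := by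
  obtain ⟨a, b, hab, h⟩ := exists_coll hm hf
  obtain ⟨d, rfl⟩ := Nat.exists_eq_add_of_lt hab
  have hfix : (dLin m ^ (d + 1)) ((dLin m ^ a) f) = (dLin m ^ a) f := by
    conv_rhs => rw [h]
    rw [← Module.End.mul_apply, ← pow_add]
    congr 2; ring
  obtain ⟨N, hN1, hN⟩ : ∃ N, 1 ≤ N ∧ (dLin m ^ N) ((dLin m ^ N) f) = (dLin m ^ N) f := by
    refine ⟨(d + 1) * (a + 1), Nat.mul_pos (by omega) (by omega), ?_⟩
    obtain ⟨r, hr⟩ := Nat.exists_eq_add_of_le' (show a ≤ (d + 1) * (a + 1) by nlinarith)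
    have h1 := pow_fix hfix (a + 1)
    have h2 : (dLin m ^ ((d + 1) * (a + 1))) f = (dLin m ^ r) ((dLin m ^ a) f) := by
      rw [hr, pow_add, Module.End.mul_apply]
    rw [h2, ← Module.End.mul_apply, ← pow_add, add_comm, pow_add, Module.End.mul_apply, h1]
  have hper : ∀ c, Function.Periodic f c → Function.Periodic (f - (dLin m ^ N) f) c :=
    fun c hc x => by
      have := periodic_dLin hc N x
      simp only [Pi.sub_apply, this, hc x]
  have hI : IsPeriodicSeq ((dLin m ^ N) f) := by
    obtain ⟨j, hj, hp⟩ := hf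
    exact ⟨j, hj, periodic_dLin hp N⟩
  have hNp : IsPeriodicSeq (f - (dLin m ^ N) f) := by
    obtain ⟨j, hj, hp⟩ := hf
    exact ⟨j, hj, hper j hp⟩
  have hN0 : (dLin m ^ N) (f - (dLin m ^ N) f) = 0 := by rw [map_sub, hN, sub_self]
  refine ⟨(dLin m ^ N) f, f - (dLin m ^ N) f, hI, hNp, ⟨N, hN1, ?_⟩, ⟨N, hN1, ?_⟩,
    by abel, ?_, ?_⟩
  · rw [dLin_pow, hN]
  · rw [dLin_pow, hN0]
  · apply Nat.dvd_antisymm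
    · rw [← periodic_iff_dvd hf]
      have h1 := (periodic_iff_dvd hI _).2 (Nat.dvd_lcm_left (perSeq ((dLin m ^ N) f))
        (perSeq (f - (dLin m ^ N) f)))
      have h2 := (periodic_iff_dvd hNp _).2 (Nat.dvd_lcm_right (perSeq ((dLin m ^ N) f))
        (perSeq (f - (dLin m ^ N) f)))
      intro x
      have e1 := h1 x
      have e2 := h2 x
      rw [Pi.sub_apply, Pi.sub_apply, e1] at e2
      exact sub_left_injective e2
    · have hp := (perSeq_spec hf).2
      exact Nat.lcm_dvd ((periodic_iff_dvd hI _).1 (periodic_dLin hp N))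
        ((periodic_iff_dvd hNp _).1 (hper _ hp))
  · rintro gI gN - - ⟨s, hs1, hs⟩ ⟨t, ht1, ht⟩ hfg
    rw [dLin_pow] at hs ht
    have hz : gI - (dLin m ^ N) f = 0 := by
      have e1 : (dLin m ^ (s * N)) (gI - (dLin m ^ N) f) = gI - (dLin m ^ N) f := by
        have := pow_fix hN s
        rw [map_sub, pow_fix hs N, mul_comm, this]
      have e0 : gI - (dLin m ^ N) f = (f - (dLin m ^ N) f) - gN := by
        have : gI = f - gN := by rw [hfg]; abel
        rw [this]; abel
      have e2 : (dLin m ^ (N + t)) (gI - (dLin m ^ N) f) = 0 := by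
        rw [e0, map_sub, pow_zero_le hN0 (by omega), pow_zero_le ht (by omega), sub_zero]
      rw [← pow_fix e1 (N + t)]
      exact pow_zero_le e2 (Nat.le_mul_of_pos_left _ (Nat.mul_pos (by omega) (by omega)))
    have h1 := sub_eq_zero.1 hz
    refine ⟨h1, ?_⟩
    rw [← h1]; nth_rewrite 1 [hfg]; abel
end

section
/- Let m = p_1^{ℓ_1}···p_t^{ℓ_t} with p_1,…,p_t distinct primes, let f be a periodic sequence in Z_m, and for each i let f_{p_i} be the periodic sequence in Z_{p_i^{ℓ_i}} obtained by composing f with the natural projection Z_m → Z_{p_i^{ℓ_i}}. Then: f is nilpotent if and only if every f_{p_i} is nilpotent, and in that case the nilpotency index of f is the maximum of the nilpotency indices of the f_{p_i}; f is idempotent if and only if every f_{p_i} is idempotent, and in that case the idempotency index of f is the least common multiple of the idempotency indices of the f_{p_i}; moreover τ(f) = lcm{τ(f_{p_i}) : 1 ≤ i ≤ t}. -/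
theorem aux_min {α : Type*} (g : α → α) (x : α) :
    sInf {j | 1 ≤ j ∧ g^[j] x = x} = Function.minimalPeriod g x := by
  by_cases h : x ∈ Function.periodicPts g
  · have hpos := Function.minimalPeriod_pos_of_mem_periodicPts h
    apply le_antisymm
    · exact Nat.sInf_le ⟨hpos, Function.isPeriodicPt_minimalPeriod g x⟩
    · have hne : {j | 1 ≤ j ∧ g^[j] x = x}.Nonempty :=
        ⟨_, hpos, Function.isPeriodicPt_minimalPeriod g x⟩
      have hh := Nat.sInf_mem hne
      exact Function.IsPeriodicPt.minimalPeriod_le hh.1 hh.2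
  · rw [Function.minimalPeriod_eq_zero_of_notMem_periodicPts h]
    have : {j | 1 ≤ j ∧ g^[j] x = x} = ∅ := by
      ext j
      simp only [Set.mem_ofPred_eq, Set.mem_empty_iff_false, iff_false]
      rintro ⟨h1, h2⟩
      exact h ⟨j, h1, h2⟩
    rw [this]; simp

theorem aux_lcm {α ι : Type*} [Fintype ι] {β : ι → Type*} (g : α → α) (x : α)
    (g' : ∀ i, β i → β i) (x' : ∀ i, β i)
    (h : ∀ n, g^[n] x = x ↔ ∀ i, (g' i)^[n] (x' i) = x' i) :
    Function.minimalPeriod g x = Finset.univ.lcm fun i => Function.minimalPeriod (g' i) (x' i) := by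
  apply Nat.dvd_antisymm
  · apply Function.IsPeriodicPt.minimalPeriod_dvd
    refine (h _).2 fun i => ?_
    have : Function.IsPeriodicPt (g' i) _ (x' i) :=
      Function.isPeriodicPt_iff_minimalPeriod_dvd.2
        (Finset.dvd_lcm (f := fun i => Function.minimalPeriod (g' i) (x' i)) (Finset.mem_univ i))
    exact this
  · apply Finset.lcm_dvd
    intro i _
    apply Function.IsPeriodicPt.minimalPeriod_dvd
    exact (h _).1 (Function.isPeriodicPt_minimalPeriod g x) i

theorem aux_shift {M : ℕ} (f : ℕ → ZMod M) (j : ℕ) : shiftSeq^[j] f = fun n => f (n + j) := by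
  induction j with
  | zero => rfl
  | succ k ih =>
    rw [Function.iterate_succ_apply', ih]
    funext n
    simp only [shiftSeq]
    congr 1; omega

theorem aux_per {M : ℕ} (f : ℕ → ZMod M) :
    perSeq f = Function.minimalPeriod shiftSeq f := by
  rw [← aux_min, perSeq]
  congr 1
  ext j
  simp only [Set.mem_ofPred_eq, aux_shift, funext_iff, Function.Periodic]

theorem aux_delta {M N : ℕ} (φ : ZMod M →+* ZMod N) (f : ℕ → ZMod M) (j : ℕ) :
    deltaSeq^[j] (fun n => φ (f n)) = fun n => φ (deltaSeq^[j] f n) := by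
  induction j with
  | zero => rfl
  | succ k ih =>
    rw [Function.iterate_succ_apply', ih, Function.iterate_succ_apply']
    funext n
    simp [deltaSeq]

theorem aux_zero {M : ℕ} (f : ℕ → ZMod M) {a b : ℕ} (hab : a ≤ b) (h : deltaSeq^[a] f = 0) :
    deltaSeq^[b] f = 0 := by
  induction b, hab using Nat.le_induction with
  | base => exact h
  | succ k _ ih =>
    rw [Function.iterate_succ_apply', ih]
    funext n
    simp [deltaSeq]

/-- CRT decomposition of nilpotency, idempotency, indices and periods. -/
theorem stmt2 (t : ℕ) (p : Fin t → ℕ) (l : Fin t → ℕ) (hp : ∀ i, (p i).Prime)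
    (hinj : Function.Injective p) (hl : ∀ i, 1 ≤ l i)
    (m : ℕ) (hm : m = ∏ i, p i ^ l i) (hm2 : 2 ≤ m)
    (f : ℕ → ZMod m) (hf : IsPeriodicSeq f)
    (fp : ∀ i : Fin t, ℕ → ZMod (p i ^ l i))
    (hfp : ∀ i n, fp i n = ((f n).val : ZMod (p i ^ l i))) :
    (IsNilpotentSeq f ↔ ∀ i, IsNilpotentSeq (fp i)) ∧
    (IsNilpotentSeq f → nilIndex f = Finset.univ.sup fun i => nilIndex (fp i)) ∧
    (IsIdempotentSeq f ↔ ∀ i, IsIdempotentSeq (fp i)) ∧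
    (IsIdempotentSeq f → idemIndex f = Finset.univ.lcm fun i => idemIndex (fp i)) ∧
    perSeq f = Finset.univ.lcm fun i => perSeq (fp i) := by
  have hm0 : NeZero m := ⟨by omega⟩
  have hdvd : ∀ i, p i ^ l i ∣ m := fun i => by
    rw [hm]; exact Finset.dvd_prod_of_mem _ (Finset.mem_univ i)
  have ht : ∃ i : Fin t, True := by
    by_contra hcon
    have : IsEmpty (Fin t) := ⟨fun i => hcon ⟨i, trivial⟩⟩
    rw [hm, Finset.prod_of_isEmpty] at hm2
    omega
  obtain ⟨i0, -⟩ := ht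
  let φ : ∀ i, ZMod m →+* ZMod (p i ^ l i) := fun i => ZMod.castHom (hdvd i) _
  have hφ : ∀ i (a : ZMod m), φ i a = ((a.val : ℕ) : ZMod (p i ^ l i)) := fun i a => by
    simp only [φ, ZMod.castHom_apply, ZMod.natCast_val]
  have hz : ∀ a : ZMod m, (∀ i, φ i a = 0) → a = 0 := by
    intro a ha
    have h1 : ∀ i, p i ^ l i ∣ a.val := fun i => by
      have := ha i
      rwa [hφ, ZMod.natCast_eq_zero_iff] at this
    have h2 : ∏ i, p i ^ l i ∣ a.val := by
      apply Finset.prod_dvd_of_isRelPrime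
      · intro i _ j _ hij
        exact Nat.coprime_iff_isRelPrime.1 (Nat.Coprime.pow _ _
          ((Nat.coprime_primes (hp i) (hp j)).2 fun h => hij (hinj h)))
      · intro i _; exact h1 i
    rw [← hm] at h2
    have := Nat.eq_zero_of_dvd_of_lt h2 (ZMod.val_lt a)
    exact (ZMod.val_eq_zero a).1 this
  have hinj2 : ∀ a b : ZMod m, a = b ↔ ∀ i, φ i a = φ i b := by
    intro a b
    refine ⟨fun h i => by rw [h], fun h => ?_⟩
    rw [← sub_eq_zero]
    apply hz
    intro i
    rw [map_sub, h, sub_self]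
  have hfp' : ∀ i, fp i = fun n => φ i (f n) := fun i => by
    funext n; rw [hfp, hφ]
  have hN : ∀ n, deltaSeq^[n] f = 0 ↔ ∀ i, deltaSeq^[n] (fp i) = 0 := by
    intro n
    simp only [hfp', aux_delta, funext_iff, Pi.zero_apply]
    constructor
    · intro h i k; rw [h, map_zero]
    · intro h k; exact hz _ fun i => h i k
  have hI : ∀ n, deltaSeq^[n] f = f ↔ ∀ i, deltaSeq^[n] (fp i) = fp i := by
    intro n
    simp only [hfp', aux_delta, funext_iff]
    constructor
    · intro h i k; rw [h]
    · intro h k; exact (hinj2 _ _).2 fun i => h i k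
  have hS : ∀ n, shiftSeq^[n] f = f ↔ ∀ i, shiftSeq^[n] (fp i) = fp i := by
    intro n
    simp only [hfp', aux_shift, funext_iff]
    constructor
    · intro h i k; rw [h]
    · intro h k; exact (hinj2 _ _).2 fun i => h i k
  have hmem : ∀ i, IsNilpotentSeq (fp i) →
      1 ≤ nilIndex (fp i) ∧ deltaSeq^[nilIndex (fp i)] (fp i) = 0 := fun i h => Nat.sInf_mem h
  have hsup : (∀ i, IsNilpotentSeq (fp i)) →
      1 ≤ (Finset.univ.sup fun i => nilIndex (fp i)) ∧
        deltaSeq^[Finset.univ.sup fun i => nilIndex (fp i)] f = 0 := by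
    intro h
    have hle : ∀ i, nilIndex (fp i) ≤ Finset.univ.sup fun i => nilIndex (fp i) :=
      fun i => Finset.le_sup (f := fun i => nilIndex (fp i)) (Finset.mem_univ i)
    exact ⟨(hmem i0 (h i0)).1.trans (hle i0),
      (hN _).2 fun i => aux_zero _ (hle i) (hmem i (h i)).2⟩
  have hnil : IsNilpotentSeq f → ∀ i, IsNilpotentSeq (fp i) := by
    rintro ⟨n, h1, h2⟩ i
    exact ⟨n, h1, (hN n).1 h2 i⟩
  refine ⟨⟨hnil, fun h => ⟨_, hsup h⟩⟩, ?_, ⟨?_, ?_⟩, ?_, ?_⟩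
  · intro h
    apply le_antisymm
    · exact Nat.sInf_le (hsup (hnil h))
    · apply Finset.sup_le
      intro i _
      have hh : 1 ≤ nilIndex f ∧ deltaSeq^[nilIndex f] f = 0 := Nat.sInf_mem h
      exact Nat.sInf_le ⟨hh.1, (hN _).1 hh.2 i⟩
  · rintro ⟨n, h1, h2⟩ i
    exact ⟨n, h1, (hI n).1 h2 i⟩
  · intro h
    choose e he1 he2 using h
    refine ⟨∏ i, e i, Nat.succ_le_of_lt (Finset.prod_pos fun i _ => he1 i), (hI _).2 fun i => ?_⟩
    have : Function.IsPeriodicPt deltaSeq (e i) (fp i) := he2 i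
    exact this.trans_dvd (Finset.dvd_prod_of_mem _ (Finset.mem_univ i))
  · intro _
    simp only [idemIndex, aux_min]
    exact aux_lcm _ _ (fun i => deltaSeq) fp hI
  · simp only [aux_per]
    exact aux_lcm _ _ (fun i => shiftSeq) fp hS
end

section
/- Let p be a prime, ℓ ≥ 1, and let f be a periodic sequence in Z_{p^ℓ}. Then f is nilpotent if and only if τ(f) = p^t for some t ∈ ℕ. -/
open Polynomial in
theorem aux_poly1 (p l t : ℕ) (hp : p.Prime) :
    ∃ r : (ZMod (p ^ l))[X], (X - 1 : (ZMod (p ^ l))[X]) ^ (p ^ t * l) = r * (X ^ (p ^ t) - 1) := by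
  obtain ⟨r, hr⟩ := exists_add_pow_prime_pow_eq hp (X - 1 : (ZMod (p ^ l))[X]) 1 t
  have h0 : (p : (ZMod (p ^ l))[X]) ^ l = 0 := by
    have := CharP.cast_eq_zero (ZMod (p ^ l))[X] (p ^ l)
    exact_mod_cast this
  have h1 : (X - 1 : (ZMod (p ^ l))[X]) ^ (p ^ t) - (- ((p : (ZMod (p ^ l))[X]) * ((X - 1) * 1 * r)))
      = X ^ (p ^ t) - 1 := by
    rw [sub_add_cancel, one_pow] at hr
    rw [hr]; ring
  have h2 := sub_dvd_pow_sub_pow ((X - 1 : (ZMod (p ^ l))[X]) ^ (p ^ t)) (- ((p : (ZMod (p ^ l))[X]) * ((X - 1) * 1 * r))) l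
  rw [h1, neg_pow, mul_pow, h0, zero_mul, mul_zero, sub_zero, ← pow_mul] at h2
  obtain ⟨s, hs⟩ := h2
  exact ⟨s, by rw [hs, mul_comm]⟩

open Polynomial in
theorem aux_poly2 (p l e : ℕ) (hp : p.Prime) :
    ∃ r : (ZMod (p ^ l))[X], (X : (ZMod (p ^ l))[X]) ^ (p ^ (e + l)) - 1 = r * (X - 1) ^ e := by
  obtain ⟨r, hr⟩ := exists_add_pow_prime_pow_eq hp (X - 1 : (ZMod (p ^ l))[X]) 1 e
  have h0 : (p : (ZMod (p ^ l))[X]) ^ l = 0 := by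
    have := CharP.cast_eq_zero (ZMod (p ^ l))[X] (p ^ l)
    exact_mod_cast this
  rw [sub_add_cancel, one_pow] at hr
  have h1 : (p : (ZMod (p ^ l))[X]) ∣ X ^ (p ^ e) - ((X - 1) ^ (p ^ e) + 1) :=
    ⟨(X - 1) * 1 * r, by rw [hr]; ring⟩
  have h2 := dvd_sub_pow_of_dvd_sub h1 l
  rw [pow_succ, h0, zero_mul, zero_dvd_iff, ← pow_mul, ← pow_add, sub_eq_zero] at h2
  have h3 := sub_dvd_pow_sub_pow ((X - 1 : (ZMod (p ^ l))[X]) ^ (p ^ e) + 1) 1 (p ^ l)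
  rw [add_sub_cancel_right, one_pow, ← h2] at h3
  obtain ⟨s, hs⟩ := (pow_dvd_pow (X - 1 : (ZMod (p ^ l))[X]) (Nat.lt_pow_self hp.one_lt).le).trans h3
  exact ⟨s, by rw [hs, mul_comm]⟩

def shiftLin (M : ℕ) : Module.End (ZMod M) (ℕ → ZMod M) where
  toFun := shiftSeq
  map_add' _ _ := rfl
  map_smul' _ _ := rfl

theorem shiftLin_pow (M j : ℕ) (f : ℕ → ZMod M) (n : ℕ) : (shiftLin M ^ j) f n = f (n + j) := by
  induction j generalizing n with
  | zero => simp
  | succ j ih =>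
    rw [pow_succ', Module.End.mul_apply]
    change (shiftLin M ^ j) f (n + 1) = _
    rw [ih]; congr 1; omega

theorem delta_iter (M j : ℕ) (f : ℕ → ZMod M) : deltaSeq^[j] f = ((shiftLin M - 1) ^ j) f := by
  induction j with
  | zero => simp
  | succ j ih =>
    rw [Function.iterate_succ_apply', ih, pow_succ', Module.End.mul_apply]
    rfl

theorem periodic_iff (M j : ℕ) (f : ℕ → ZMod M) :
    Function.Periodic f j ↔ (shiftLin M ^ j - 1) f = 0 := by
  rw [LinearMap.sub_apply, sub_eq_zero]
  simp [Function.Periodic, funext_iff, shiftLin_pow]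

open Polynomial in
theorem stmt3_fwd (p l e : ℕ) (hp : p.Prime) (f : ℕ → ZMod (p ^ l))
    (h : deltaSeq^[e] f = 0) : Function.Periodic f (p ^ (e + l)) := by
  obtain ⟨r, hr⟩ := aux_poly2 p l e hp
  have := congrArg (fun q => aeval (shiftLin (p ^ l)) q f) hr
  simp only [map_sub, map_mul, map_pow, aeval_X, map_one, Module.End.mul_apply] at this
  rw [← delta_iter, h, map_zero] at this
  exact (periodic_iff _ _ _).2 this

open Polynomial in
theorem stmt3_bwd (p l t : ℕ) (hp : p.Prime) (f : ℕ → ZMod (p ^ l))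
    (h : Function.Periodic f (p ^ t)) : deltaSeq^[p ^ t * l] f = 0 := by
  obtain ⟨r, hr⟩ := aux_poly1 p l t hp
  have := congrArg (fun q => aeval (shiftLin (p ^ l)) q f) hr
  simp only [map_sub, map_mul, map_pow, aeval_X, map_one, Module.End.mul_apply] at this
  rw [(periodic_iff _ _ _).1 h, map_zero] at this
  rw [delta_iter, this]

/-- a periodic sequence in `Z_{p^ℓ}` is nilpotent iff its period is
a power of `p`. -/
theorem stmt3 (p l : ℕ) (hp : p.Prime) (hl : 1 ≤ l)
    (f : ℕ → ZMod (p ^ l)) (hf : IsPeriodicSeq f) :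
    IsNilpotentSeq f ↔ ∃ t : ℕ, perSeq f = p ^ t := by
  have hm : 1 ≤ perSeq f ∧ Function.Periodic f (perSeq f) :=
    Nat.sInf_mem (s := {j | 1 ≤ j ∧ Function.Periodic f j}) hf
  constructor
  · rintro ⟨e, -, he⟩
    have h1 := stmt3_fwd p l e hp f he
    have hd : perSeq f ∣ p ^ (e + l) := by
      rw [Nat.dvd_iff_mod_eq_zero]
      by_contra hne
      have hper : Function.Periodic f (p ^ (e + l) % perSeq f) := by
        intro x
        have h2 := hm.2.nat_mul (p ^ (e + l) / perSeq f) (x + p ^ (e + l) % perSeq f)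
        rw [← h2, ← h1 x]
        congr 1
        have := Nat.mod_add_div (p ^ (e + l)) (perSeq f)
        rw [Nat.cast_id, mul_comm, add_assoc, this]
      have h3 : perSeq f ≤ p ^ (e + l) % perSeq f :=
        Nat.sInf_le (s := {j | 1 ≤ j ∧ Function.Periodic f j}) ⟨Nat.pos_of_ne_zero hne, hper⟩
      exact absurd (Nat.mod_lt (p ^ (e + l)) hm.1) (not_lt.2 h3)
    obtain ⟨t, -, ht⟩ := (Nat.dvd_prime_pow hp).1 hd
    exact ⟨t, ht⟩
  · rintro ⟨t, ht⟩
    exact ⟨p ^ t * l, Nat.mul_pos (pow_pos hp.pos t) hl, stmt3_bwd p l t hp f (ht ▸ hm.2)⟩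
end

section
/- Let p be a prime, ℓ ≥ 1, and let f be a periodic sequence in Z_{p^ℓ} with period τ(f) = q·p^t where p does not divide q. Then the nilpotent part f_N of f (from the unique decomposition f = f_I + f_N into idempotent plus nilpotent part) equals q^{−1}·∑_{j=1}^{q} θ^{j p^t} f, where q^{−1} is the multiplicative inverse of q modulo p^ℓ. -/
theorem aux_abs {A M : Type*} [CommRing A] [AddCommGroup M] [Module A M]
    (p l q t : ℕ) (hp : p.Prime) (hpl : ((p : A)) ^ l = 0) (u : A) (hu : u * (q : A) = 1)
    (T : A) (f fI fN : M) (hf : T ^ (q * p ^ t) • f = f) (m k : ℕ) (hm : 1 ≤ m) (hk : 1 ≤ k)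
    (hI : (T - 1) ^ m • fI = fI) (hN : (T - 1) ^ k • fN = 0) (hsum : f = fI + fN) :
    u • (∑ j ∈ Finset.Icc 1 q, T ^ (j * p ^ t)) • f = fN := by
  have hIn : ∀ n : ℕ, ((T - 1) ^ m) ^ n • fI = fI := by
    intro n
    induction n with
    | zero => simp
    | succ n ih => rw [pow_succ, mul_smul, hI, ih]
  have hNz : ((T - 1) ^ m) ^ k • fN = 0 := by
    rw [← pow_mul]
    obtain ⟨d, hd⟩ : ∃ d, m * k = d + k := ⟨m * k - k, by
      have : k ≤ m * k := Nat.le_mul_of_pos_left k hm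
      omega⟩
    rw [hd, pow_add, mul_smul, hN, smul_zero]
  have hfI : fI = ((T - 1) ^ m) ^ k • f := by
    rw [hsum, smul_add, hIn, hNz, add_zero]
  have hIper : T ^ (q * p ^ t) • fI = fI := by
    rw [hfI, smul_comm, hf]
  have hNper : T ^ (q * p ^ t) • fN = fN := by
    have : fN = f - fI := by rw [hsum]; abel
    rw [this, smul_sub, hf, hIper]
  have hP : ∑ j ∈ Finset.Icc 1 q, T ^ (j * p ^ t) =
      T ^ (p ^ t) * ∑ i ∈ Finset.range q, (T ^ (p ^ t)) ^ i := by
    rw [Finset.mul_sum, Finset.sum_bij' (fun j _ => j - 1) (fun i _ => i + 1)]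
    · intro j hj
      simp only [Finset.mem_Icc, Finset.mem_range] at *
      omega
    · intro j hj
      simp only [Finset.mem_Icc, Finset.mem_range] at *
      omega
    · intro j hj
      simp only [Finset.mem_Icc] at hj
      omega
    · intro j hj
      simp
    · intro j hj
      have h1 := (Finset.mem_Icc.1 hj).1
      rw [← pow_succ', ← pow_mul, Nat.sub_add_cancel h1, mul_comm]
  rw [mul_comm, pow_mul] at hIper hNper
  rw [hP]
  obtain ⟨r, hr⟩ := exists_add_pow_prime_pow_eq hp (T - 1) (1 : A) t
  obtain ⟨e, he⟩ := sub_one_dvd_pow_sub_one T (p ^ t)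
  rw [sub_add_cancel, one_pow] at hr
  generalize T ^ (p ^ t) = a at *
  -- idempotent part
  have h1 : (a * ∑ i ∈ Finset.range q, a ^ i) • fI = 0 := by
    set g := (a * ∑ i ∈ Finset.range q, a ^ i) • fI with hg
    have hag : (a - 1) • g = 0 := by
      rw [hg, smul_smul, show (a - 1) * (a * ∑ i ∈ Finset.range q, a ^ i) = a * (a ^ q - 1) by
        rw [← mul_geom_sum]; ring, mul_smul, sub_smul, hIper, one_smul, sub_self, smul_zero]
    have hD : ((T - 1) ^ p ^ t) • g = (p : A) • (-((T - 1) * r)) • g := by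
      rw [show (T - 1) ^ p ^ t = (a - 1) + p * (-((T - 1) * r)) by rw [hr]; ring, add_smul, hag, zero_add,
        mul_smul]
    have hDn : ∀ n : ℕ, ((T - 1) ^ p ^ t) ^ n • g = (p : A) ^ n • (-((T - 1) * r)) ^ n • g := by
      intro n
      induction n with
      | zero => simp
      | succ n ih =>
        rw [pow_succ', mul_smul, ih, smul_comm _ ((p : A) ^ n), smul_comm _ ((-((T - 1) * r)) ^ n), hD]
        simp only [smul_smul]
        congr 1
        ring
    have h0 := hDn l
    rw [hpl, zero_smul] at h0
    have hgg : ((T - 1) ^ m) ^ (p ^ t * l) • g = g := by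
      rw [hg, smul_comm, hIn]
    obtain ⟨d, hd⟩ : ∃ d, m = d + 1 := ⟨m - 1, by omega⟩
    rw [← hgg, ← pow_mul, show m * (p ^ t * l) = d * (p ^ t * l) + p ^ t * l by rw [hd]; ring,
      pow_add, mul_smul, pow_mul _ (p ^ t) l, h0, smul_zero]
  have h2 : a • fN = fN := by
    obtain ⟨c, hc⟩ := Polynomial.powAddExpansion (1 : A) (a - 1) q
    rw [add_sub_cancel, one_pow, one_pow, mul_one] at hc
    have hb : (a - 1) ^ k • fN = 0 := by
      rw [he, mul_pow, mul_comm, mul_smul, hN, smul_zero]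
    have hh : (a - 1) • fN = (-(u * c) * (a - 1)) • (a - 1) • fN := by
      have h3 : u • (a ^ q - 1) • fN = 0 := by
        rw [sub_smul, hNper, one_smul, sub_self, smul_zero]
      rw [smul_smul, ← sub_eq_zero, ← sub_smul, ← h3, smul_smul]
      congr 1
      rw [hc]
      linear_combination (-(a - 1)) * hu
    have hhn : ∀ n : ℕ, (a - 1) • fN = (-(u * c) * (a - 1)) ^ n • (a - 1) • fN := by
      intro n
      induction n with
      | zero => simp
      | succ n ih => rw [pow_succ, mul_smul, ← hh, ← ih]
    have h4 := hhn k
    rw [mul_pow, mul_smul, smul_comm _ (a - 1), hb, smul_zero, smul_zero, sub_smul, one_smul,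
      sub_eq_zero] at h4
    exact h4
  have h3 : ∀ n : ℕ, a ^ n • fN = fN := by
    intro n
    induction n with
    | zero => simp
    | succ n ih => rw [pow_succ, mul_smul, h2, ih]
  rw [hsum, smul_add, h1, zero_add, mul_smul, Finset.sum_smul]
  simp only [h3, Finset.sum_const, Finset.card_range]
  rw [smul_comm a q, h2, ← Nat.cast_smul_eq_nsmul A, smul_smul, hu, one_smul]

def shiftEnd (M : ℕ) : Module.End (ZMod M) (ℕ → ZMod M) where
  toFun f := fun n => f (n + 1)
  map_add' _ _ := rfl
  map_smul' _ _ := rfl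

theorem shiftEnd_pow (M n : ℕ) (f : ℕ → ZMod M) (i : ℕ) : ((shiftEnd M) ^ n) f i = f (i + n) := by
  induction n generalizing f with
  | zero => simp
  | succ n ih =>
    rw [pow_succ, Module.End.mul_apply, ih]
    simp [shiftEnd, add_assoc]

theorem delta_pow (M n : ℕ) (f : ℕ → ZMod M) : ((shiftEnd M - 1) ^ n) f = deltaSeq^[n] f := by
  rw [Module.End.pow_apply]
  rfl

/-- if `τ(f) = q·p^t` with `p ∤ q`, then the nilpotent part of `f` equals
`q⁻¹` times the `p^t`-periodised sequence `∑_{j=1}^{q} θ^{j p^t} f`. -/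
theorem stmt4 (p l : ℕ) (hp : p.Prime) (hl : 1 ≤ l)
    (f fI fN : ℕ → ZMod (p ^ l)) (hf : IsPeriodicSeq f)
    (q t : ℕ) (hq : ¬ p ∣ q) (hper : perSeq f = q * p ^ t)
    (hIper : IsPeriodicSeq fI) (hNper : IsPeriodicSeq fN)
    (hI : IsIdempotentSeq fI) (hN : IsNilpotentSeq fN) (hsum : f = fI + fN) :
    fN = fun n => (q : ZMod (p ^ l))⁻¹ * ∑ j ∈ Finset.Icc 1 q, f (n + j * p ^ t) := by
  have hqp : IsUnit (q : ZMod (p ^ l)) := by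
    rw [ZMod.isUnit_iff_coprime]
    exact (((Nat.Prime.coprime_iff_not_dvd hp).2 hq).symm).pow_right l
  obtain ⟨k, hk, hN⟩ := hN
  obtain ⟨m, hm, hI⟩ := hI
  have hfp : Function.Periodic f (q * p ^ t) := by
    rw [← hper]
    exact (Nat.sInf_mem (s := {j | 1 ≤ j ∧ Function.Periodic f j}) hf).2
  letI : Module (Polynomial (ZMod (p ^ l))) (ℕ → ZMod (p ^ l)) :=
    Module.compHom _ (Polynomial.aeval (shiftEnd (p ^ l))).toRingHom
  have hsm : ∀ (P : Polynomial (ZMod (p ^ l))) (g : ℕ → ZMod (p ^ l)),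
    P • g = (Polynomial.aeval (shiftEnd (p ^ l)) P) g := fun _ _ => rfl
  have key := aux_abs (A := Polynomial (ZMod (p ^ l))) (M := ℕ → ZMod (p ^ l)) p l q t hp
    (by
      have h : ((p ^ l : ℕ) : Polynomial (ZMod (p ^ l))) = 0 := CharP.cast_eq_zero _ _
      exact_mod_cast h)
    (Polynomial.C ((q : ZMod (p ^ l))⁻¹))
    (by
      rw [← Polynomial.C_eq_natCast, ← Polynomial.C_mul, ZMod.inv_mul_of_unit _ hqp,
        Polynomial.C_1])
    Polynomial.X f fI fN
    (by
      rw [hsm]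
      funext i
      simp only [map_pow, Polynomial.aeval_X, shiftEnd_pow]
      exact hfp i)
    m k hm hk
    (by
      rw [hsm]
      simp only [map_pow, map_sub, map_one, Polynomial.aeval_X, delta_pow]
      exact hI)
    (by
      rw [hsm]
      simp only [map_pow, map_sub, map_one, Polynomial.aeval_X, delta_pow]
      exact hN)
    hsum
  rw [← key]
  funext n
  rw [hsm, hsm]
  simp only [Polynomial.aeval_C, map_sum, map_pow, Polynomial.aeval_X, LinearMap.sum_apply,
    Module.algebraMap_end_apply, Pi.smul_apply, Finset.sum_apply, shiftEnd_pow, smul_eq_mul]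
  rw [Finset.mul_sum]
end

section
/- Let p be a prime, ℓ ≥ 1, and let f be a periodic sequence in Z_{p^ℓ}. (1) If f is idempotent, then tr f = 0. (2) If tr f = 0 and p does not divide τ(f), then f is idempotent. -/
theorem delta_periodic {M : ℕ} (t : ℕ) (g : ℕ → ZMod M) (h : Function.Periodic g t) :
    Function.Periodic (deltaSeq g) t := by
  intro n
  have h1 := h (n + 1)
  have h2 := h n
  simp only [deltaSeq]
  rw [show n + t + 1 = n + 1 + t by ring, h1, h2]

theorem delta_sum {M : ℕ} (t : ℕ) (g : ℕ → ZMod M) (h : Function.Periodic g t) :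
    ∑ i ∈ Finset.range t, deltaSeq g i = 0 := by
  simp only [deltaSeq]
  rw [Finset.sum_range_sub]
  have := h 0
  rw [zero_add] at this
  rw [this, sub_self]

theorem delta_iter_periodic {M : ℕ} (t : ℕ) (g : ℕ → ZMod M) (h : Function.Periodic g t) (k : ℕ) :
    Function.Periodic (deltaSeq^[k] g) t := by
  induction k with
  | zero => exact h
  | succ k ih =>
    rw [Function.iterate_succ_apply']
    exact delta_periodic t _ ih

theorem idem_of_inj {M : ℕ} [NeZero M] (t : ℕ) (ht : 1 ≤ t) (hu : IsUnit (t : ZMod M))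
    (f : ℕ → ZMod M) (hf : Function.Periodic f t) (hs : ∑ i ∈ Finset.range t, f i = 0) :
    IsIdempotentSeq f := by
  let S := {g : ℕ → ZMod M // Function.Periodic g t ∧ ∑ i ∈ Finset.range t, g i = 0}
  have hfin : Finite S := by
    refine Finite.of_injective (fun (g : S) (i : Fin t) => g.1 i) ?_
    intro g h hgh
    apply Subtype.ext
    funext n
    have := congrFun hgh ⟨n % t, Nat.mod_lt _ ht⟩
    simp only at this
    rwa [g.2.1.map_mod_nat, h.2.1.map_mod_nat] at this
  let F : S → S := fun g => ⟨deltaSeq g.1, delta_periodic t _ g.2.1, delta_sum t _ g.2.1⟩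
  have hF : Function.Injective F := by
    intro g h hgh
    have hd : deltaSeq g.1 = deltaSeq h.1 := congrArg Subtype.val hgh
    have hc : ∀ n, g.1 n - h.1 n = g.1 0 - h.1 0 := by
      intro n
      induction n with
      | zero => rfl
      | succ n ih =>
        have := congrFun hd n
        simp only [deltaSeq] at this
        linear_combination this + ih
    have h0 : (t : ZMod M) * (g.1 0 - h.1 0) = 0 := by
      have h1 : ∑ i ∈ Finset.range t, (g.1 i - h.1 i) = 0 := by
        rw [Finset.sum_sub_distrib, g.2.2, h.2.2, sub_zero]
      rw [Finset.sum_congr rfl (fun i _ => hc i)] at h1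
      rwa [Finset.sum_const, Finset.card_range, nsmul_eq_mul] at h1
    have h2 := (hu.mul_right_eq_zero).1 h0
    apply Subtype.ext
    funext n
    exact sub_eq_zero.1 ((hc n).trans h2)
  obtain ⟨n, hn, hp⟩ := hF.mem_periodicPts ⟨f, hf, hs⟩
  refine ⟨n, hn, ?_⟩
  have hit : ∀ (k : ℕ) (g : S), (F^[k] g).1 = deltaSeq^[k] g.1 := by
    intro k
    induction k with
    | zero => intro g; rfl
    | succ k ih =>
      intro g
      rw [Function.iterate_succ_apply, Function.iterate_succ_apply, ih]
  have := hit n ⟨f, hf, hs⟩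
  rw [hp.eq] at this
  exact this.symm

/-- (1) an idempotent periodic sequence has zero trace;
(2) a periodic sequence with zero trace whose period is prime to `p` is idempotent. -/
theorem stmt5 (p l : ℕ) (hp : p.Prime) (hl : 1 ≤ l)
    (f : ℕ → ZMod (p ^ l)) (hf : IsPeriodicSeq f) :
    (IsIdempotentSeq f → trSeq f = 0) ∧
    (trSeq f = 0 → ¬ p ∣ perSeq f → IsIdempotentSeq f) := by
  obtain ⟨ht, hper⟩ : 1 ≤ perSeq f ∧ Function.Periodic f (perSeq f) := Nat.sInf_mem hf
  constructor
  · rintro ⟨η, hη, h⟩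
    obtain ⟨k, rfl⟩ : ∃ k, η = k + 1 := ⟨η - 1, by omega⟩
    rw [Function.iterate_succ_apply'] at h
    have := delta_sum (perSeq f) _ (delta_iter_periodic (perSeq f) f hper k)
    rw [h] at this
    exact this
  · intro hs hd
    haveI : NeZero (p ^ l) := ⟨pow_ne_zero _ hp.ne_zero⟩
    refine idem_of_inj (perSeq f) ht ?_ f hper hs
    rw [ZMod.isUnit_iff_coprime]
    exact (((Nat.Prime.coprime_iff_not_dvd hp).2 hd).pow_left l).symm
end

section
/- Let p be a prime, ℓ ≥ 1, and let f be a nilpotent periodic sequence in Z_{p^ℓ} of nilpotency index η, with generating vector vect(f) = (e_0, …, e_{η−1}). Then f = ∑_{i=0}^{η−1} Σ^i [e_i]. -/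
theorem sigmaSeq_add' {M : ℕ} (f g : ℕ → ZMod M) :
    sigmaSeq (f + g) = sigmaSeq f + sigmaSeq g := by
  funext n
  induction n with
  | zero => simp [sigmaSeq]
  | succ n ih =>
    simp only [Pi.add_apply] at ih
    simp only [sigmaSeq, Pi.add_apply, ih]
    ring

theorem sigmaSeq_iter_add {M : ℕ} (k : ℕ) (f g : ℕ → ZMod M) :
    sigmaSeq^[k] (f + g) = sigmaSeq^[k] f + sigmaSeq^[k] g := by
  induction k with
  | zero => rfl
  | succ k ih => simp only [Function.iterate_succ_apply', ih, sigmaSeq_add']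

theorem sigmaSeq_iter_zero {M : ℕ} (k : ℕ) :
    sigmaSeq^[k] (0 : ℕ → ZMod M) = 0 := by
  have h := sigmaSeq_iter_add k (0 : ℕ → ZMod M) 0
  rw [add_zero] at h
  exact left_eq_add.mp h

theorem const_add_sigma_delta {M : ℕ} (g : ℕ → ZMod M) :
    g = (fun _ => g 0) + sigmaSeq (deltaSeq g) := by
  funext n
  induction n with
  | zero => simp [sigmaSeq]
  | succ n ih =>
    simp only [Pi.add_apply] at ih
    simp only [sigmaSeq, Pi.add_apply, deltaSeq] at ih ⊢
    linear_combination ih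

theorem taylor_seq {M : ℕ} (f : ℕ → ZMod M) (k : ℕ) :
    f = ∑ i ∈ Finset.range k, sigmaSeq^[i] (fun _ => deltaSeq^[i] f 0)
      + sigmaSeq^[k] (deltaSeq^[k] f) := by
  induction k with
  | zero => simp
  | succ k ih =>
    rw [Finset.sum_range_succ, add_assoc, Function.iterate_succ_apply sigmaSeq,
      ← sigmaSeq_iter_add, Function.iterate_succ_apply' deltaSeq, ← const_add_sigma_delta]
    exact ih

/-- a nilpotent sequence of nilpotency index `η` with generating vector
`(e_0, …, e_{η-1})` satisfies `f = ∑_{i<η} Σ^i [e_i]`. -/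
theorem stmt7 (p l : ℕ) (hp : p.Prime) (hl : 1 ≤ l)
    (f : ℕ → ZMod (p ^ l)) (hf : IsPeriodicSeq f)
    (η : ℕ) (hη : 1 ≤ η) (hnil : deltaSeq^[η] f = 0)
    (hmin : ∀ k, 1 ≤ k → deltaSeq^[k] f = 0 → η ≤ k) :
    f = ∑ i ∈ Finset.range η, sigmaSeq^[i] (fun _ => deltaSeq^[i] f 0) := by
  have h := taylor_seq f η
  rw [hnil, sigmaSeq_iter_zero, add_zero] at h
  exact h
end

section
/- Let p be a prime, ℓ ≥ 1, and let [c] be a nonzero constant sequence in Z_{p^ℓ} with ν_p(c) = t. Let s ≥ 1 have base-p expansion s = ⌊a_k a_{k−1} ⋯ a_1 a_0⌋_p with a_k ≠ 0. Then ν_p( ∑_{n=0}^{p^{ℓ−t+k}−1} Σ^s[c](n) ) = ℓ−1 if a_k = a_{k−1} = ⋯ = a_0 = p−1, and ν_p( ∑_{n=0}^{p^{ℓ−t+k}−1} Σ^s[c](n) ) ≥ ℓ otherwise (i.e. the sum is 0 in Z_{p^ℓ} in the latter case). -/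
lemma aux_sum_sigma {M : ℕ} (f : ℕ → ZMod M) (n : ℕ) :
    ∑ i ∈ Finset.range n, f i = sigmaSeq f n := by
  induction n with
  | zero => simp [sigmaSeq]
  | succ n ih => rw [Finset.sum_range_succ, ih, sigmaSeq, add_comm]

lemma aux_sigma_iter {M : ℕ} (c : ZMod M) (s n : ℕ) :
    sigmaSeq^[s] (fun _ => c) n = c * (n.choose s : ZMod M) := by
  induction s generalizing n with
  | zero => simp
  | succ s ih =>
    rw [Function.iterate_succ_apply']
    induction n with
    | zero => simp [sigmaSeq]
    | succ n ihn =>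
      rw [sigmaSeq, ihn, ih, Nat.choose_succ_succ]
      push_cast
      ring

lemma aux_ofDigits (p : ℕ) (hp : 1 ≤ p) (k : ℕ) :
    Nat.ofDigits p (List.replicate k (p - 1)) + 1 = p ^ k := by
  induction k with
  | zero => simp
  | succ k ih =>
    rw [List.replicate_succ, Nat.ofDigits_cons, pow_succ, ← ih]
    obtain ⟨q, rfl⟩ : ∃ q, p = q + 1 := ⟨p - 1, by omega⟩
    simp only [Nat.add_sub_cancel, Nat.cast_id]
    ring

lemma aux_digits (p : ℕ) (hp : p.Prime) (k s : ℕ) :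
    Nat.digits p s = List.replicate (k + 1) (p - 1) ↔ s + 1 = p ^ (k + 1) := by
  have h2 := hp.two_le
  have h := aux_ofDigits p (by omega) (k + 1)
  constructor
  · intro hd
    rw [← h, ← hd, Nat.ofDigits_digits]
  · intro hs
    have : s = Nat.ofDigits p (List.replicate (k + 1) (p - 1)) := by omega
    rw [this]
    apply Nat.digits_ofDigits p (by omega)
    · intro x hx
      rw [List.eq_of_mem_replicate hx]; omega
    · intro hne
      rw [List.getLast_replicate]; omega

/-- valuation of `∑_{n<p^{ℓ-t+k}} Σ^s[c](n)`: it has valuation `ℓ-1` if all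
base-`p` digits of `s` equal `p-1`, and it is zero in `Z_{p^ℓ}` otherwise. -/
theorem stmt9 (p l : ℕ) (hp : p.Prime) (hl : 1 ≤ l)
    (c : ZMod (p ^ l)) (hc : c ≠ 0) (t : ℕ) (ht : t = padicValNat p c.val)
    (s k : ℕ) (hs : 1 ≤ s) (hk1 : p ^ k ≤ s) (hk2 : s < p ^ (k + 1)) :
    ((Nat.digits p s = List.replicate (k + 1) (p - 1)) →
      (∑ n ∈ Finset.range (p ^ (l - t + k)), sigmaSeq^[s] (fun _ => c) n) ≠ 0 ∧
      padicValNat p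
        (∑ n ∈ Finset.range (p ^ (l - t + k)), sigmaSeq^[s] (fun _ => c) n).val = l - 1) ∧
    ((Nat.digits p s ≠ List.replicate (k + 1) (p - 1)) →
      (∑ n ∈ Finset.range (p ^ (l - t + k)), sigmaSeq^[s] (fun _ => c) n) = 0) := by
  haveI : Fact p.Prime := ⟨hp⟩
  have hpl : 0 < p ^ l := pow_pos hp.pos l
  haveI : NeZero (p ^ l) := ⟨hpl.ne'⟩
  have hcv : c.val ≠ 0 := by simpa [ZMod.val_eq_zero] using hc
  have hclt : c.val < p ^ l := ZMod.val_lt c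
  have htl : t < l := by
    by_contra hcon
    have h1 : p ^ l ∣ c.val := (padicValNat_dvd_iff_le hcv).2 (by omega)
    exact absurd (Nat.le_of_dvd (by omega) h1) (by omega)
  have hsN : s + 1 ≤ p ^ (l - t + k) :=
    le_trans hk2 (Nat.pow_le_pow_right hp.pos (by omega))
  have hch : (p ^ (l - t + k)).choose (s + 1) ≠ 0 := (Nat.choose_pos hsN).ne'
  have hX0 : c.val * (p ^ (l - t + k)).choose (s + 1) ≠ 0 := mul_ne_zero hcv hch
  have hval : padicValNat p (c.val * (p ^ (l - t + k)).choose (s + 1)) +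
      padicValNat p (s + 1) = l + k := by
    have h := Nat.factorization_choose_prime_pow_add_factorization hp hsN (by omega)
    rw [Nat.factorization_def _ hp, Nat.factorization_def _ hp] at h
    rw [padicValNat.mul hcv hch, ← ht]
    omega
  have hsum : (∑ n ∈ Finset.range (p ^ (l - t + k)), sigmaSeq^[s] (fun _ => c) n) =
      ((c.val * (p ^ (l - t + k)).choose (s + 1) : ℕ) : ZMod (p ^ l)) := by
    rw [aux_sum_sigma, ← Function.iterate_succ_apply' sigmaSeq, aux_sigma_iter]
    push_cast
    rw [ZMod.natCast_zmod_val]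
  rw [hsum]
  generalize c.val * (p ^ (l - t + k)).choose (s + 1) = X at *
  constructor
  · intro h
    rw [aux_digits p hp] at h
    rw [h, padicValNat.prime_pow] at hval
    have hX : padicValNat p X = l - 1 := by omega
    have hnd : ¬ p ^ l ∣ X := by
      rw [padicValNat_dvd_iff_le hX0]; omega
    have hd : p ^ (l - 1) ∣ X := by
      rw [padicValNat_dvd_iff_le hX0]; omega
    have hne : ((X : ℕ) : ZMod (p ^ l)) ≠ 0 := by
      rwa [Ne, ZMod.natCast_eq_zero_iff]
    refine ⟨hne, ?_⟩
    rw [ZMod.val_natCast]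
    have hm0 : X % p ^ l ≠ 0 := fun h0 => hnd (Nat.dvd_of_mod_eq_zero h0)
    have h1 : p ^ (l - 1) ∣ X % p ^ l :=
      (Nat.dvd_mod_iff (pow_dvd_pow p (by omega))).2 hd
    have h2 : ¬ p ^ l ∣ X % p ^ l := by
      rwa [Nat.dvd_mod_iff dvd_rfl]
    rw [padicValNat_dvd_iff_le hm0] at h1 h2
    omega
  · intro h
    rw [Ne, aux_digits p hp] at h
    rw [ZMod.natCast_eq_zero_iff, padicValNat_dvd_iff_le hX0]
    have : padicValNat p (s + 1) < k + 1 := by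
      by_contra hcon
      have h1 : p ^ (k + 1) ∣ s + 1 :=
        (padicValNat_dvd_iff_le (by omega)).2 (by omega)
      have := Nat.le_of_dvd (by omega) h1
      omega
    omega
end

section
/- Let p be a prime, ℓ ≥ 1, and let [c] be a nonzero constant sequence in Z_{p^ℓ} with t = ν_p(c). Let s ≥ 1 have base-p expansion s = ⌊a_{k_s} a_{k_s−1} ⋯ a_1 a_0⌋_p with a_{k_s} ≠ 0 (so k_s = ⌊log_p s⌋). Then the period of Σ^s[c] is exactly p^{ℓ−t+k_s}. -/
theorem aux_sigma {M : ℕ} (c : ZMod M) (s : ℕ) :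
    sigmaSeq^[s] (fun _ => c) = fun n : ℕ => c * (n.choose s : ZMod M) := by
  induction s with
  | zero => simp
  | succ s ih =>
    rw [Function.iterate_succ_apply', ih]
    funext n
    induction n with
    | zero => simp [sigmaSeq]
    | succ n ihn =>
      rw [sigmaSeq, ihn, Nat.choose_succ_succ]
      push_cast
      ring

theorem aux_down {M : ℕ} (c : ZMod M) (s j : ℕ)
    (h : Function.Periodic (fun n : ℕ => c * (n.choose (s + 1) : ZMod M)) j) :
    Function.Periodic (fun n : ℕ => c * (n.choose s : ZMod M)) j := by
  intro n
  have h1 := h (n + 1)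
  have h2 := h n
  simp only at h1 h2 ⊢
  rw [show n + 1 + j = (n + j) + 1 by ring, Nat.choose_succ_succ, Nat.choose_succ_succ] at h1
  push_cast at h1
  linear_combination h1 - h2

theorem aux_zero_s10 {M : ℕ} (c : ZMod M) (s j : ℕ)
    (h : Function.Periodic (fun n : ℕ => c * (n.choose s : ZMod M)) j) :
    ∀ i, 1 ≤ i → i ≤ s → c * (j.choose i : ZMod M) = 0 := by
  induction s with
  | zero => intro i h1 h2; omega
  | succ s ih =>
    intro i h1 h2
    rcases Nat.lt_or_ge s i with h3 | h3
    · obtain rfl : i = s + 1 := by omega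
      have := h 0
      simpa using this
    · exact ih (aux_down c s j h) i h1 h3

theorem aux_up {M : ℕ} (c : ZMod M) (s j : ℕ)
    (h : ∀ i, 1 ≤ i → i ≤ s → c * (j.choose i : ZMod M) = 0) :
    Function.Periodic (fun n : ℕ => c * (n.choose s : ZMod M)) j := by
  induction s with
  | zero => intro n; simp
  | succ s ih =>
    have ih' := ih (fun i h1 h2 => h i h1 (by omega))
    intro n
    induction n with
    | zero => simpa using h (s + 1) (by omega) le_rfl
    | succ n ihn =>
      have h2 := ih' n
      simp only at h2 ihn ⊢
      rw [show n + 1 + j = (n + j) + 1 by ring, Nat.choose_succ_succ, Nat.choose_succ_succ]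
      push_cast
      linear_combination h2 + ihn

theorem aux_mul (p l : ℕ) (hp : p.Prime) (c : ZMod (p ^ l)) (hc : c ≠ 0) (a : ℕ) :
    c * (a : ZMod (p ^ l)) = 0 ↔ p ^ (l - padicValNat p c.val) ∣ a := by
  haveI := Fact.mk hp
  haveI : NeZero (p ^ l) := ⟨pow_ne_zero _ hp.ne_zero⟩
  have hv : c.val ≠ 0 := by rwa [Ne, ZMod.val_eq_zero]
  conv_lhs => rw [← ZMod.natCast_zmod_val c, ← Nat.cast_mul]
  rw [ZMod.natCast_eq_zero_iff]
  rcases eq_or_ne a 0 with rfl | ha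
  · simp
  · rw [padicValNat_dvd_iff_le (mul_ne_zero hv ha), padicValNat_dvd_iff_le ha,
      padicValNat.mul hv ha]
    omega

theorem aux_lt (p l : ℕ) (hp : p.Prime) (c : ZMod (p ^ l)) (hc : c ≠ 0) :
    padicValNat p c.val < l := by
  by_contra h
  have := (aux_mul p l hp c hc 1).2 (by rw [Nat.sub_eq_zero_of_le (by omega)]; simp)
  simp at this
  exact hc this

theorem aux_mod {M : ℕ} (f : ℕ → ZMod M) (a b : ℕ) (ha : Function.Periodic f a)
    (hb : Function.Periodic f b) : Function.Periodic f (b % a) := by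
  intro n
  have h1 := ha.nat_mul (b / a) (n + b % a)
  rw [← h1]
  have : n + b % a + ((b / a : ℕ) : ℕ) * a = n + b := by
    have := Nat.mod_add_div b a
    rw [mul_comm a] at this
    omega
  simpa [this] using hb n

theorem aux_per_s10 {M : ℕ} (f : ℕ → ZMod M) (b : ℕ) (hb1 : 1 ≤ b)
    (hb : Function.Periodic f b) :
    1 ≤ perSeq f ∧ Function.Periodic f (perSeq f) ∧ perSeq f ∣ b := by
  have hm : perSeq f ∈ {j | 1 ≤ j ∧ Function.Periodic f j} := Nat.sInf_mem ⟨b, hb1, hb⟩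
  refine ⟨hm.1, hm.2, ?_⟩
  by_contra hd
  have h1 : 1 ≤ b % perSeq f := by
    rcases Nat.eq_zero_or_pos (b % perSeq f) with h | h
    · exact absurd (Nat.dvd_of_mod_eq_zero h) hd
    · exact h
  have h2 : perSeq f ≤ b % perSeq f := Nat.sInf_le ⟨h1, aux_mod f _ _ hm.2 hb⟩
  have h3 := Nat.mod_lt b hm.1
  omega

/-- the period of `Σ^s[c]` is exactly `p^{ℓ - t + k_s}` where
`t = ν_p(c)` and `k_s = ⌊log_p s⌋`. -/
theorem stmt10 (p l : ℕ) (hp : p.Prime) (hl : 1 ≤ l)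
    (c : ZMod (p ^ l)) (hc : c ≠ 0) (t : ℕ) (ht : t = padicValNat p c.val)
    (s : ℕ) (hs : 1 ≤ s) :
    perSeq (sigmaSeq^[s] (fun _ => c)) = p ^ (l - t + Nat.log p s) := by
  haveI := Fact.mk hp
  have htl : t < l := ht ▸ aux_lt p l hp c hc
  rw [aux_sigma]
  set k := Nat.log p s with hk
  have hsk : s < p ^ (k + 1) := Nat.lt_pow_succ_log_self hp.one_lt s
  have hks : p ^ k ≤ s := Nat.pow_log_le_self p (by omega)
  obtain ⟨m, hm⟩ : ∃ m, l - t = m + 1 := ⟨l - t - 1, by omega⟩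
  have hper : Function.Periodic (fun n : ℕ => c * (n.choose s : ZMod (p ^ l)))
      (p ^ (l - t + k)) := by
    apply aux_up
    intro i h1 h2
    rw [aux_mul p l hp c hc, ← ht]
    have hle : i ≤ p ^ (l - t + k) :=
      (h2.trans hsk.le).trans (Nat.pow_le_pow_right hp.pos (by omega))
    have h := Nat.factorization_choose_prime_pow_add_factorization hp hle (by omega)
    have hi : i.factorization p ≤ k := by
      have := Nat.ordProj_le (n := i) p (by omega)
      have h4 := (Nat.pow_lt_pow_iff_right hp.one_lt).1 ((this.trans h2).trans_lt hsk)
      omega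
    exact (hp.pow_dvd_iff_le_factorization (Nat.choose_pos hle).ne').2 (by omega)
  obtain ⟨-, hP, hd⟩ := aux_per_s10 _ _ (Nat.one_le_pow _ _ hp.pos) hper
  obtain ⟨e, he, hpe⟩ := (Nat.dvd_prime_pow hp).1 hd
  rw [hpe] at hP ⊢
  rcases he.eq_or_lt with rfl | hlt
  · rfl
  exfalso
  have hP2 := hP.nat_mul (p ^ (m + k - e))
  rw [Nat.cast_id, ← pow_add, Nat.sub_add_cancel (by omega)] at hP2
  have h0 := aux_zero_s10 c s _ hP2 (p ^ k) (Nat.one_le_pow _ _ hp.pos) hks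
  have hle : p ^ k ≤ p ^ (m + k) := Nat.pow_le_pow_right hp.pos (by omega)
  rw [aux_mul p l hp c hc, ← ht,
    hp.pow_dvd_iff_le_factorization (Nat.choose_pos hle).ne'] at h0
  have h := Nat.factorization_choose_prime_pow_add_factorization hp hle
    (pow_ne_zero _ hp.ne_zero)
  rw [hp.factorization_pow, Finsupp.single_eq_same] at h
  omega
end

section
/- Let p be a prime, ℓ ≥ 1, and let f be a nonzero nilpotent periodic sequence in Z_{p^ℓ} of nilpotency index η, with generating vector (e_0, …, e_{η−1}) and leading component e_γ. Let μ be the minimal natural number with η − γ − 1 < p^μ(p−1). Then for every s ≥ p^μ − γ, the period of Σ^s f equals the period of Σ^{s+γ}[e_γ]; in particular τ(Σ^s f) = τ(Σ^{s+γ}[e_γ]) for all sufficiently large s. -/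
lemma s11_delta (M : ℕ) (f : ℕ → ZMod M) : deltaSeq f = fwdDiff 1 f := rfl

lemma s11_newton (M : ℕ) (g : ℕ → ZMod M) (n y : ℕ) :
    g (y + n) = ∑ k ∈ Finset.range (n + 1), (n.choose k : ZMod M) * deltaSeq^[k] g y := by
  have h := shift_eq_sum_fwdDiff_iter (1:ℕ) g n y
  have e : (deltaSeq : (ℕ → ZMod M) → _) = fwdDiff 1 := rfl
  simpa [e] using h

lemma s11_shift (M : ℕ) (J : ℕ) (k : ℕ) : ∀ (g : ℕ → ZMod M),
    deltaSeq^[k] (fun n => g (n + J)) = fun n => deltaSeq^[k] g (n + J) := by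
  induction k with
  | zero => intro g; rfl
  | succ k ih =>
    intro g
    rw [Function.iterate_succ_apply, Function.iterate_succ_apply, ← ih (deltaSeq g)]
    congr 1
    funext n
    simp only [deltaSeq]
    rw [show n + 1 + J = n + J + 1 by ring]

lemma s11_ext (M : ℕ) (g h : ℕ → ZMod M) (H : ∀ k, deltaSeq^[k] g 0 = deltaSeq^[k] h 0) : g = h := by
  funext n
  have h1 := s11_newton M g n 0
  have h2 := s11_newton M h n 0
  simp only [zero_add] at h1 h2
  rw [h1, h2]
  exact Finset.sum_congr rfl (fun k _ => by rw [H])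

lemma s11_expand (M J m : ℕ) (g : ℕ → ZMod M) :
    deltaSeq^[m] g J = deltaSeq^[m] g 0 + ∑ j ∈ Finset.range J,
      (J.choose (j+1) : ZMod M) * deltaSeq^[m + (j + 1)] g 0 := by
  have h := s11_newton M (deltaSeq^[m] g) J 0
  rw [zero_add, Finset.sum_range_succ'] at h
  rw [h, add_comm]
  congr 1
  · simp
  · refine Finset.sum_congr rfl (fun k _ => ?_)
    rw [add_comm m, Function.iterate_add_apply deltaSeq (k + 1) m g]

lemma s11_periodic (M J : ℕ) (g : ℕ → ZMod M) :
    Function.Periodic g J ↔ ∀ m, ∑ j ∈ Finset.range J,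
      (J.choose (j+1) : ZMod M) * deltaSeq^[m + (j + 1)] g 0 = 0 := by
  have key : Function.Periodic g J ↔ ∀ m, deltaSeq^[m] g J = deltaSeq^[m] g 0 := by
    constructor
    · intro h m
      have e : (fun n => g (n + J)) = g := funext h
      have := congrFun (s11_shift M J m g) 0
      rw [e] at this
      simpa using this.symm
    · intro h n
      have : (fun n => g (n + J)) = g := by
        apply s11_ext
        intro k
        rw [s11_shift]
        simpa using h k
      exact congrFun this n
  rw [key]
  refine forall_congr' (fun m => ?_)
  rw [s11_expand]
  simp

lemma s11_choose (p n u j : ℕ) (hp : p.Prime) (hj : j ≠ 0) (hjn : j ≤ p ^ n)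
    (h : ¬ p ^ (u + 1) ∣ j) : p ^ (n - u) ∣ (p ^ n).choose j := by
  have h1 := Nat.factorization_choose_prime_pow hp hjn hj
  have hc : (p ^ n).choose j ≠ 0 := (Nat.choose_pos hjn).ne'
  rw [hp.pow_dvd_iff_le_factorization hc, h1]
  rw [hp.pow_dvd_iff_le_factorization hj] at h
  omega

lemma s11_choose' (p n t : ℕ) (hp : p.Prime) (ht : t ≤ n) :
    ((p ^ n).choose (p ^ t)).factorization p = n - t := by
  have hjn : p ^ t ≤ p ^ n := Nat.pow_le_pow_right hp.pos ht
  rw [Nat.factorization_choose_prime_pow hp hjn (pow_pos hp.pos t).ne']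
  simp [hp.factorization_self]

lemma s11_zero (p l a b x : ℕ) (e : ZMod (p ^ l)) [NeZero (p ^ l)] (hab : l ≤ a + b)
    (hx : p ^ a ∣ x) (he : p ^ b ∣ e.val) : (x : ZMod (p ^ l)) * e = 0 := by
  rw [← ZMod.natCast_zmod_val e, ← Nat.cast_mul, ZMod.natCast_eq_zero_iff]
  exact (pow_dvd_pow p hab).trans (by rw [pow_add]; exact mul_dvd_mul hx he)

lemma s11_key (p l : ℕ) (hp : p.Prime) (g : ℕ → ZMod (p ^ l)) (v t K : ℕ) (hv : v < l)
    (ha1 : p ^ t ≤ K) (ha2 : K < p ^ (t + 1))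
    (hb : ∀ k, p ^ v ∣ (deltaSeq^[k] g 0).val)
    (hc : ∀ k, K < k → p ^ (v + 1) ∣ (deltaSeq^[k] g 0).val)
    (hd : ∀ k, K + p ^ t * (p - 1) ≤ k → deltaSeq^[k] g 0 = 0)
    (he : ¬ p ^ (v + 1) ∣ (deltaSeq^[K] g 0).val) :
    perSeq g = p ^ (l - v + t) := by
  haveI : NeZero (p ^ l) := ⟨(pow_pos hp.pos l).ne'⟩
  have hpt : p ^ t * (p - 1) + p ^ t = p ^ (t + 1) := by
    obtain ⟨q, rfl⟩ : ∃ q, p = q + 1 := ⟨p - 1, by have := hp.pos; omega⟩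
    simp; ring
  have hp2 : p ^ (t + 1) * 2 ≤ p ^ (t + 2) := by
    rw [pow_succ p (t + 1)]; exact Nat.mul_le_mul_left _ hp.two_le
  have hpos : 0 < p ^ t := pow_pos hp.pos t
  have upper : Function.Periodic g (p ^ (l - v + t)) := by
    rw [s11_periodic]
    intro m
    refine Finset.sum_eq_zero (fun j hj => ?_)
    rw [Finset.mem_range] at hj
    by_cases h1 : K + p ^ t * (p - 1) ≤ m + (j + 1)
    · rw [hd _ h1, mul_zero]
    by_cases h2 : K < m + (j + 1)
    · refine s11_zero p l (l - v + t - (t + 1)) (v + 1) _ _ (by omega) ?_ (hc _ h2)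
      refine s11_choose p _ _ _ hp (by omega) (by omega) (fun h => ?_)
      have := Nat.le_of_dvd (by omega) h
      rw [show t + 1 + 1 = t + 2 by rfl] at this
      omega
    · refine s11_zero p l (l - v + t - t) v _ _ (by omega) ?_ (hb _)
      refine s11_choose p _ _ _ hp (by omega) (by omega) (fun h => ?_)
      have := Nat.le_of_dvd (by omega) h
      omega
  have lower : ¬ Function.Periodic g (p ^ (l - v + t - 1)) := by
    rw [s11_periodic]
    intro H
    have H := H (K - p ^ t)
    have hle : p ^ t ≤ p ^ (l - v + t - 1) := Nat.pow_le_pow_right hp.pos (by omega)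
    rw [Finset.sum_eq_single (p ^ t - 1)] at H
    · rw [show p ^ t - 1 + 1 = p ^ t by omega, show K - p ^ t + p ^ t = K by omega,
        ← ZMod.natCast_zmod_val (deltaSeq^[K] g 0), ← Nat.cast_mul, ZMod.natCast_eq_zero_iff] at H
      have h0 : (deltaSeq^[K] g 0).val ≠ 0 := fun h => he (by rw [h]; exact dvd_zero _)
      have hch : (p ^ (l - v + t - 1)).choose (p ^ t) ≠ 0 := (Nat.choose_pos hle).ne'
      rw [hp.pow_dvd_iff_le_factorization (mul_ne_zero hch h0), Nat.factorization_mul hch h0,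
        Finsupp.add_apply, s11_choose' p _ _ hp (by omega)] at H
      rw [hp.pow_dvd_iff_le_factorization h0] at he
      omega
    · intro j hj hne
      rw [Finset.mem_range] at hj
      by_cases h1 : j + 1 < p ^ t
      · have ht : t ≠ 0 := by rintro rfl; simp at h1
        refine s11_zero p l (l - v + t - 1 - (t - 1)) v _ _ (by omega) ?_ (hb _)
        refine s11_choose p _ _ _ hp (by omega) (by omega) (fun h => ?_)
        have := Nat.le_of_dvd (by omega) h
        rw [show t - 1 + 1 = t by omega] at this
        omega
      by_cases h2 : p ^ (t + 1) ∣ j + 1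
      · have := Nat.le_of_dvd (by omega) h2
        rw [hd _ (by omega), mul_zero]
      · refine s11_zero p l (l - v + t - 1 - t) (v + 1) _ _ (by omega) ?_ (hc _ (by omega))
        exact s11_choose p _ _ _ hp (by omega) (by omega) h2
    · intro h
      exact absurd (Finset.mem_range.mpr (by omega)) h
  have hne : {j | 1 ≤ j ∧ Function.Periodic g j}.Nonempty := ⟨_, pow_pos hp.pos _, upper⟩
  have hmem : 1 ≤ perSeq g ∧ Function.Periodic g (perSeq g) := Nat.sInf_mem hne
  have hdvd : perSeq g ∣ p ^ (l - v + t) := by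
    set N := p ^ (l - v + t)
    rw [Nat.dvd_iff_mod_eq_zero]
    by_contra hcon
    have hper : Function.Periodic g (N % perSeq g) := by
      intro x
      have h1 := upper x
      have h2 := (hmem.2.nat_mul (N / perSeq g)) (x + N % perSeq g)
      rw [← h2, ← h1]
      congr 1
      have := Nat.mod_add_div N (perSeq g)
      simp only [Nat.cast_id]
      rw [mul_comm]
      omega
    have : perSeq g ≤ N % perSeq g := Nat.sInf_le ⟨by omega, hper⟩
    have := Nat.mod_lt N (show perSeq g > 0 by omega)
    omega
  obtain ⟨i, hi, hgi⟩ := (Nat.dvd_prime_pow hp).1 hdvd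
  rcases hi.lt_or_eq with hlt | rfl
  · exfalso
    apply lower
    obtain ⟨c, hc⟩ : p ^ i ∣ p ^ (l - v + t - 1) := pow_dvd_pow p (by omega)
    have := hmem.2.nat_mul c
    rw [hc, mul_comm, ← hgi]
    simpa using this
  · exact hgi

lemma s11_sigma (M s : ℕ) : ∀ (k : ℕ) (f : ℕ → ZMod M),
    deltaSeq^[k] (sigmaSeq^[s] f) 0 = if k < s then 0 else deltaSeq^[k - s] f 0 := by
  have hds : ∀ f : ℕ → ZMod M, deltaSeq (sigmaSeq f) = f := by
    intro f; funext n; simp [deltaSeq, sigmaSeq]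
  induction s with
  | zero => intro k f; simp
  | succ s ih =>
    intro k f
    rw [Function.iterate_succ_apply']
    cases k with
    | zero => simp [sigmaSeq]
    | succ k =>
      rw [Function.iterate_succ_apply, hds, ih]
      simp

lemma s11_const (M k : ℕ) (c : ZMod M) (hk : 0 < k) : deltaSeq^[k] (fun _ => c) 0 = 0 := by
  have hz : ∀ k, deltaSeq^[k] (fun _ => (0 : ZMod M)) = fun _ => 0 := by
    intro k
    induction k with
    | zero => rfl
    | succ k ih => rw [Function.iterate_succ_apply', ih]; funext n; simp [deltaSeq]
  obtain ⟨k, rfl⟩ : ∃ i, k = i + 1 := ⟨k - 1, by omega⟩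
  rw [Function.iterate_succ_apply]
  have : deltaSeq (fun _ => c) = fun _ => (0 : ZMod M) := by funext n; simp [deltaSeq]
  rw [this, hz]

/-- for a nonzero nilpotent sequence with leading component `e_γ`, for all
`s ≥ p^μ - γ` (with `μ` minimal such that `η - γ - 1 < p^μ(p-1)`) the period of `Σ^s f`
equals the period of `Σ^{s+γ}[e_γ]`. -/
theorem stmt11 (p l : ℕ) (hp : p.Prime) (hl : 1 ≤ l)
    (f : ℕ → ZMod (p ^ l)) (hf : IsPeriodicSeq f) (hf0 : f ≠ 0)
    (η : ℕ) (hη : 1 ≤ η) (hnil : deltaSeq^[η] f = 0)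
    (hmin : ∀ k, 1 ≤ k → deltaSeq^[k] f = 0 → η ≤ k)
    (γ : ℕ) (hγη : γ < η)
    (hlead₁ : ∀ i < η, nuVal p (deltaSeq^[γ] f 0) ≤ nuVal p (deltaSeq^[i] f 0))
    (hlead₂ : ∀ i, γ < i → i < η → nuVal p (deltaSeq^[γ] f 0) < nuVal p (deltaSeq^[i] f 0))
    (μ : ℕ) (hμ : η - γ - 1 < p ^ μ * (p - 1))
    (hμmin : ∀ ν < μ, ¬ (η - γ - 1 < p ^ ν * (p - 1))) :
    ∀ s : ℕ, p ^ μ - γ ≤ s →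
      perSeq (sigmaSeq^[s] f) = perSeq (sigmaSeq^[s + γ] (fun _ => deltaSeq^[γ] f 0)) := by
  intro s hs
  haveI : NeZero (p ^ l) := ⟨(pow_pos hp.pos l).ne'⟩
  haveI : Fact p.Prime := ⟨hp⟩
  have hzero : ∀ k, η ≤ k → deltaSeq^[k] f 0 = 0 := by
    intro k hk
    obtain ⟨d, rfl⟩ := Nat.exists_eq_add_of_le hk
    rw [add_comm, Function.iterate_add_apply, hnil]
    rcases Nat.eq_zero_or_pos d with rfl | hd
    · rfl
    · exact s11_const _ d 0 hd
  set c := deltaSeq^[γ] f 0 with hcdef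
  have hc0 : c ≠ 0 := by
    intro h0
    apply hf0
    apply s11_ext
    intro k
    have hz : deltaSeq^[k] (0 : ℕ → ZMod (p ^ l)) 0 = 0 := by
      rcases Nat.eq_zero_or_pos k with rfl | hd
      · rfl
      · exact s11_const _ k 0 hd
    rw [hz]
    by_cases hk : k < η
    · have := hlead₁ k hk
      rw [nuVal, if_pos h0, top_le_iff, nuVal] at this
      by_contra hne
      rw [if_neg hne] at this
      exact ENat.coe_ne_top _ this
    · exact hzero k (by omega)
  have hcv : c.val ≠ 0 := fun h => hc0 ((ZMod.val_eq_zero c).1 h)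
  set v := padicValNat p c.val with hvdef
  have hnc : nuVal p c = (v : ℕ∞) := by rw [nuVal, if_neg hc0]
  have hcd : p ^ v ∣ c.val := pow_padicValNat_dvd
  have hcnd : ¬ p ^ (v + 1) ∣ c.val := pow_succ_padicValNat_not_dvd hcv
  have hv : v < l := by
    have h1 := Nat.le_of_dvd (Nat.pos_of_ne_zero hcv) hcd
    have h2 := ZMod.val_lt c
    exact (Nat.pow_lt_pow_iff_right hp.one_lt).1 (lt_of_le_of_lt h1 h2)
  have hb : ∀ k, p ^ v ∣ (deltaSeq^[k] f 0).val := by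
    intro k
    by_cases h0 : deltaSeq^[k] f 0 = 0
    · rw [h0]; simp
    have hk : k < η := by by_contra h; exact h0 (hzero k (by omega))
    have := hlead₁ k hk
    rw [hnc, nuVal, if_neg h0, Nat.cast_le] at this
    exact (pow_dvd_pow p this).trans pow_padicValNat_dvd
  have hbs : ∀ k, γ < k → p ^ (v + 1) ∣ (deltaSeq^[k] f 0).val := by
    intro k hγk
    by_cases h0 : deltaSeq^[k] f 0 = 0
    · rw [h0]; simp
    have hk : k < η := by by_contra h; exact h0 (hzero k (by omega))
    have := hlead₂ k hγk hk
    rw [hnc, nuVal, if_neg h0, Nat.cast_lt] at this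
    exact (pow_dvd_pow p this).trans pow_padicValNat_dvd
  have hμpos : 0 < p ^ μ := pow_pos hp.pos μ
  have hK : s + γ ≠ 0 := by omega
  set t := Nat.log p (s + γ) with htdef
  have ht1 : p ^ t ≤ s + γ := Nat.pow_log_le_self p hK
  have ht2 : s + γ < p ^ (t + 1) := Nat.lt_pow_succ_log_self hp.one_lt _
  have hμt : μ ≤ t := Nat.le_log_of_pow_le hp.one_lt (by omega)
  have hle : p ^ μ * (p - 1) ≤ p ^ t * (p - 1) :=
    Nat.mul_le_mul_right _ (Nat.pow_le_pow_right hp.pos hμt)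
  have hpt : 0 < p ^ t * (p - 1) :=
    Nat.mul_pos (pow_pos hp.pos t) (by have := hp.two_le; omega)
  rw [s11_key p l hp (sigmaSeq^[s] f) v t (s + γ) hv ht1 ht2,
    s11_key p l hp (sigmaSeq^[s + γ] (fun _ => c)) v t (s + γ) hv ht1 ht2]
  · intro k
    rw [s11_sigma]
    split_ifs with h
    · simp
    · rcases Nat.eq_zero_or_pos (k - (s + γ)) with h1 | h1
      · rw [h1]; exact hcd
      · rw [s11_const _ _ _ h1]; simp
  · intro k hk
    rw [s11_sigma, if_neg (by omega), s11_const _ _ _ (by omega)]; simp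
  · intro k hk
    rw [s11_sigma, if_neg (by omega), s11_const _ _ _ (by omega)]
  · rw [s11_sigma, if_neg (by omega), Nat.sub_self]
    exact hcnd
  · intro k
    rw [s11_sigma]
    split_ifs with h
    · simp
    · exact hb _
  · intro k hk
    rw [s11_sigma, if_neg (by omega)]
    exact hbs _ (by omega)
  · intro k hk
    rw [s11_sigma, if_neg (by omega)]
    exact hzero _ (by omega)
  · rw [s11_sigma, if_neg (by omega), Nat.add_sub_cancel_left]
    exact hcnd
end

section
/- Let p be a prime, ℓ ≥ 1, and let f be a nonzero nilpotent periodic sequence in Z_{p^ℓ} with leading component e_γ of its generating vector. Then there exists T such that for all t ≥ T, the period of ∑_{i=0}^{t} Σ^i f equals the period of Σ^{t+γ}[e_γ]. -/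
lemma aux_per_s12 {M : ℕ} (p : ℕ) (hp : p.Prime) (h : ℕ → ZMod M) (N : ℕ)
    (h1 : Function.Periodic h (p ^ (N + 1))) (h2 : ¬ Function.Periodic h (p ^ N)) :
    perSeq h = p ^ (N + 1) := by
  have hne : {j | 1 ≤ j ∧ Function.Periodic h j}.Nonempty :=
    ⟨p ^ (N + 1), Nat.one_le_pow _ _ hp.pos, h1⟩
  have hmem := Nat.sInf_mem hne
  have hmin : ∀ j, 1 ≤ j → Function.Periodic h j → perSeq h ≤ j := fun j a b =>
    Nat.sInf_le ⟨a, b⟩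
  change 1 ≤ perSeq h ∧ Function.Periodic h (perSeq h) at hmem
  generalize perSeq h = d at *
  obtain ⟨hd1, hd⟩ := hmem
  have hmul : ∀ c, Function.Periodic h (c * d) := fun c => by
    have := hd.nat_mul c
    simpa using this
  have hdvd : d ∣ p ^ (N + 1) := by
    by_contra hc
    have hr : 1 ≤ p ^ (N + 1) % d :=
      Nat.pos_of_ne_zero fun h0 => hc (Nat.dvd_of_mod_eq_zero h0)
    have := hmin _ hr (by
      intro n
      rw [← hmul (p ^ (N + 1) / d) (n + _), add_assoc, mul_comm, Nat.mod_add_div]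
      exact h1 n)
    have := Nat.mod_lt (p ^ (N + 1)) hd1
    omega
  obtain ⟨k, hk, rfl⟩ := (Nat.dvd_prime_pow hp).1 hdvd
  rcases Nat.lt_or_ge k (N + 1) with hlt | hge
  · exfalso
    apply h2
    have := hmul (p ^ (N - k))
    rwa [← pow_add, Nat.sub_add_cancel (by omega)] at this
  · rw [le_antisymm hk hge]

lemma aux_dvd (p : ℕ) (hp : p.Prime) (a b i : ℕ) (hi : i ≠ 0) (hib : i < p ^ (b + 1)) :
    p ^ a ∣ (p ^ (a + b)).choose i := by
  rcases Nat.lt_or_ge (p ^ (a + b)) i with h | h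
  · rw [Nat.choose_eq_zero_of_lt h]; exact dvd_zero _
  have := Fact.mk hp
  have h0 : (p ^ (a + b)).choose i ≠ 0 := (Nat.choose_pos h).ne'
  have h1 : i * (p ^ (a + b)).choose i = p ^ (a + b) * (p ^ (a + b) - 1).choose (i - 1) := by
    have := Nat.add_one_mul_choose_eq (p ^ (a + b) - 1) (i - 1)
    have hpos : 1 ≤ p ^ (a + b) := Nat.one_le_pow _ _ hp.pos
    rw [Nat.sub_add_cancel hpos, Nat.sub_add_cancel (by omega)] at this
    rw [this, mul_comm]
  have h2 : p ^ (a + b) ∣ i * (p ^ (a + b)).choose i := ⟨_, h1⟩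
  rw [padicValNat_dvd_iff_le (mul_ne_zero hi h0), padicValNat.mul hi h0] at h2
  rw [padicValNat_dvd_iff_le h0]
  have h3 : padicValNat p i < b + 1 := by
    by_contra hc
    have : p ^ (b + 1) ∣ i := (padicValNat_dvd_iff_le hi).2 (by omega)
    have := Nat.le_of_dvd (Nat.pos_of_ne_zero hi) this
    omega
  omega

lemma aux_ndvd (p : ℕ) (hp : p.Prime) (a b : ℕ) :
    ¬ p ^ (a + 1) ∣ (p ^ (a + b)).choose (p ^ b) := by
  have := Fact.mk hp
  have h := hp.emultiplicity_choose_prime_pow_add_emultiplicity (n := a + b) (k := p ^ b)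
    (Nat.pow_le_pow_right hp.pos (by omega)) (pow_ne_zero _ hp.ne_zero)
  intro hd
  have h1 := le_emultiplicity_of_pow_dvd hd
  have h2 := le_emultiplicity_of_pow_dvd (dvd_refl (p ^ b))
  have h3 := add_le_add h1 h2
  rw [h] at h3
  norm_cast at h3
  omega

lemma aux_indep (D : ℤ) (c : ℕ → ℤ) (K : ℕ)
    (h : ∀ n : ℕ, D ∣ ∑ j ∈ Finset.range K, c j * (n.choose j : ℤ)) :
    ∀ j < K, D ∣ c j := by
  intro j
  induction j using Nat.strong_induction_on with
  | _ j ih =>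
    intro hj
    have h1 := h j
    rw [← Finset.add_sum_erase _ _ (Finset.mem_range.2 hj)] at h1
    simp only [Nat.choose_self, Nat.cast_one, mul_one] at h1
    refine (dvd_add_left (Finset.dvd_sum ?_)).1 h1
    intro i hi
    simp only [Finset.mem_erase, Finset.mem_range] at hi
    rcases Nat.lt_or_ge i j with hij | hij
    · exact (ih i hij hi.2).mul_right _
    · rw [Nat.choose_eq_zero_of_lt (by omega)]; simp

lemma aux_diff (B : ℕ → ℤ) (K q n : ℕ) :
    ∑ k ∈ Finset.range K, B k * ((n + q).choose k : ℤ)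
      - ∑ k ∈ Finset.range K, B k * (n.choose k : ℤ)
    = ∑ j ∈ Finset.range K, (∑ i ∈ Finset.range K,
        if i ≠ 0 ∧ i + j < K then B (i + j) * (q.choose i : ℤ) else 0) * (n.choose j : ℤ) := by
  have key : ∀ k ∈ Finset.range K, B k * ((n + q).choose k : ℤ) - B k * (n.choose k : ℤ)
      = ∑ j ∈ Finset.range K, ∑ i ∈ Finset.range K,
        if i ≠ 0 ∧ i + j = k then B k * (q.choose i : ℤ) * (n.choose j : ℤ) else 0 := by
    intro k hk
    rw [Finset.mem_range] at hk
    rw [Nat.add_choose_eq]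
    push_cast
    have h1 : ∑ ij ∈ Finset.HasAntidiagonal.antidiagonal k, (n.choose ij.1 : ℤ) * (q.choose ij.2 : ℤ)
        = ∑ j ∈ Finset.range K, ∑ i ∈ Finset.range K,
          if i + j = k then (q.choose i : ℤ) * (n.choose j : ℤ) else 0 := by
      rw [← Finset.sum_product', ← Finset.sum_filter]
      refine Finset.sum_bij (fun x _ => x) ?_ ?_ ?_ ?_
      · rintro ⟨a, b⟩ h
        simp at h ⊢
        omega
      · intros; assumption
      · rintro ⟨a, b⟩ h
        simp at h ⊢
        omega
      · intros; ring
    have h2 : (n.choose k : ℤ) = ∑ j ∈ Finset.range K, ∑ i ∈ Finset.range K,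
          if i = 0 ∧ i + j = k then (q.choose i : ℤ) * (n.choose j : ℤ) else 0 := by
      rw [Finset.sum_eq_single k, Finset.sum_eq_single 0]
      · simp
      · intro b _ hb; simp [hb]
      · intro hh; exact absurd (Finset.mem_range.2 (by omega)) hh
      · intro b _ hb
        apply Finset.sum_eq_zero
        intro i _
        rw [if_neg]; omega
      · intro hh; exact absurd (Finset.mem_range.2 hk) hh
    rw [h1, h2, ← mul_sub, ← Finset.sum_sub_distrib, Finset.mul_sum]
    refine Finset.sum_congr rfl fun j _ => ?_
    rw [← Finset.sum_sub_distrib, Finset.mul_sum]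
    refine Finset.sum_congr rfl fun i _ => ?_
    by_cases hi : i = 0 <;> by_cases hk : i + j = k <;> simp [hi, hk, mul_assoc] <;> grind
  rw [← Finset.sum_sub_distrib, Finset.sum_congr rfl key, Finset.sum_comm]
  refine Finset.sum_congr rfl fun j _ => ?_
  rw [Finset.sum_comm, Finset.sum_mul]
  refine Finset.sum_congr rfl fun i _ => ?_
  by_cases hi : i ≠ 0 ∧ i + j < K
  · rw [if_pos hi, Finset.sum_eq_single (i + j)]
    · simp [hi.1]
    · intro b _ hb; rw [if_neg]; omega
    · intro hh; exact absurd (Finset.mem_range.2 hi.2) hh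
  · rw [if_neg hi, zero_mul]
    apply Finset.sum_eq_zero
    intro b hb
    rw [Finset.mem_range] at hb
    rw [if_neg]; omega

lemma aux_up_s12 (p : ℕ) (hp : p.Prime) (m L s K : ℕ) (B : ℕ → ℤ)
    (hs2 : s < p ^ (L + 1)) (hK : K ≤ p ^ (L + 2))
    (hB : ∀ k, s < k → k < K → (p : ℤ) ∣ B k) (n : ℕ) :
    (p : ℤ) ^ (m + 1) ∣ ∑ k ∈ Finset.range K, B k * ((n + p ^ (m + 1 + L)).choose k : ℤ)
      - ∑ k ∈ Finset.range K, B k * (n.choose k : ℤ) := by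
  rw [aux_diff]
  refine Finset.dvd_sum fun j _ => Dvd.dvd.mul_right (Finset.dvd_sum fun i _ => ?_) _
  split_ifs with h
  · rcases Nat.lt_or_ge s (i + j) with h1 | h1
    · rw [pow_succ, mul_comm]
      refine mul_dvd_mul (hB _ h1 h.2) ?_
      have := aux_dvd p hp m (L + 1) i h.1 (lt_of_lt_of_le (by omega) hK)
      rw [show m + 1 + L = m + (L + 1) by ring]
      exact_mod_cast this
    · refine Dvd.dvd.mul_left ?_ _
      have := aux_dvd p hp (m + 1) L i h.1 (by omega)
      exact_mod_cast this
  · exact dvd_zero _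

lemma aux_low (p : ℕ) (hp : p.Prime) (m L s K : ℕ) (B : ℕ → ℤ)
    (hs1 : p ^ L ≤ s) (hsK : s < K) (hK : K + p ^ L ≤ p ^ (L + 1) + s)
    (hBs : ¬ (p : ℤ) ∣ B s)
    (hB : ∀ k, s < k → k < K → (p : ℤ) ∣ B k) :
    ¬ ∀ n : ℕ, (p : ℤ) ^ (m + 1) ∣ ∑ k ∈ Finset.range K, B k * ((n + p ^ (m + L)).choose k : ℤ)
      - ∑ k ∈ Finset.range K, B k * (n.choose k : ℤ) := by
  intro hall
  simp only [aux_diff] at hall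
  have hpL : 0 < p ^ L := Nat.pow_pos hp.pos
  have h1 := aux_indep _ _ _ hall (s - p ^ L) (by omega)
  rw [← Finset.add_sum_erase _ _ (Finset.mem_range.2 (show p ^ L < K by omega))] at h1
  rw [if_pos (by omega), show p ^ L + (s - p ^ L) = s by omega] at h1
  have h2 := (dvd_add_left (Finset.dvd_sum ?_)).1 h1
  · obtain ⟨c, hc⟩ := aux_dvd p hp m L (p ^ L) hpL.ne' (Nat.pow_lt_pow_right hp.one_lt (by omega))
    have hc' : ¬ p ∣ c := by
      intro ⟨d, hd⟩
      apply aux_ndvd p hp m L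
      rw [hc, hd]
      exact ⟨d, by ring⟩
    rw [hc] at h2
    push_cast at h2
    rw [show B s * ((p : ℤ) ^ m * c) = (p : ℤ) ^ m * (B s * c) by ring, pow_succ,
      mul_dvd_mul_iff_left (pow_ne_zero _ (by exact_mod_cast hp.ne_zero))] at h2
    rcases (Nat.prime_iff_prime_int.1 hp).dvd_or_dvd h2 with h3 | h3
    · exact hBs h3
    · exact hc' (by exact_mod_cast h3)
  · intro i hi
    simp only [Finset.mem_erase, Finset.mem_range] at hi
    split_ifs with h
    · rcases Nat.lt_or_ge i (p ^ L) with h3 | h3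
      · refine Dvd.dvd.mul_left ?_ _
        rcases L with _ | L
        · simp at h3; omega
        · have := aux_dvd p hp (m + 1) L i h.1 h3
          rw [show m + (L + 1) = m + 1 + L by ring]
          exact_mod_cast this
      · rw [pow_succ, mul_comm]
        refine mul_dvd_mul (hB _ (by omega) h.2) ?_
        have := aux_dvd p hp m L i h.1 (by omega)
        exact_mod_cast this
    · exact dvd_zero _

lemma aux_main (p l : ℕ) (hp : p.Prime) (h : ℕ → ZMod (p ^ l)) (m v L s K : ℕ) (B : ℕ → ℤ)
    (hl : l = v + (m + 1))
    (hs1 : p ^ L ≤ s) (hs2 : s < p ^ (L + 1)) (hsK : s < K)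
    (hK : K + p ^ L ≤ p ^ (L + 1) + s) (hK2 : K ≤ p ^ (L + 2))
    (hBs : ¬ (p : ℤ) ∣ B s) (hB : ∀ k, s < k → k < K → (p : ℤ) ∣ B k)
    (hh : ∀ n, h n = (((p : ℤ) ^ v * ∑ k ∈ Finset.range K, B k * (n.choose k : ℤ) : ℤ)
      : ZMod (p ^ l))) :
    perSeq h = p ^ (m + L + 1) := by
  have key : ∀ q, Function.Periodic h q ↔ ∀ n : ℕ, (p : ℤ) ^ (m + 1) ∣
      ∑ k ∈ Finset.range K, B k * ((n + q).choose k : ℤ)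
      - ∑ k ∈ Finset.range K, B k * (n.choose k : ℤ) := by
    intro q
    refine forall_congr' fun n => ?_
    rw [hh, hh, eq_comm, ZMod.intCast_eq_intCast_iff_dvd_sub, ← mul_sub, hl]
    push_cast
    rw [pow_add, mul_dvd_mul_iff_left (pow_ne_zero _ (by exact_mod_cast hp.ne_zero))]
  apply aux_per_s12 p hp
  · rw [key, show m + L + 1 = m + 1 + L by ring]
    exact aux_up_s12 p hp m L s K B hs2 hK2 hB
  · rw [key]
    exact aux_low p hp m L s K B hs1 hsK hK hBs hB

lemma aux_newton {M : ℕ} (f : ℕ → ZMod M) (η : ℕ) (h : deltaSeq^[η] f = 0) (n : ℕ) :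
    f n = ∑ i ∈ Finset.range η, deltaSeq^[i] f 0 * (n.choose i : ZMod M) := by
  induction η generalizing f n with
  | zero => simp at h; simp [h]
  | succ η ih =>
    rw [Function.iterate_succ_apply] at h
    have ih := ih _ h
    induction n with
    | zero =>
      rw [Finset.sum_range_succ']
      simp
    | succ n ihn =>
      have e : f (n + 1) = f n + deltaSeq f n := by simp [deltaSeq]
      rw [e, ihn, ih, Finset.sum_range_succ', Finset.sum_range_succ']
      simp only [Nat.choose_succ_succ, Function.iterate_succ_apply]
      push_cast
      simp only [mul_add, Finset.sum_add_distrib]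
      simp
      ring

lemma aux_sigma_s12 {M : ℕ} (f : ℕ → ZMod M) (η : ℕ) (e : ℕ → ZMod M)
    (h : ∀ n, f n = ∑ i ∈ Finset.range η, e i * (n.choose i : ZMod M)) (t n : ℕ) :
    sigmaSeq^[t] f n = ∑ i ∈ Finset.range η, e i * (n.choose (t + i) : ZMod M) := by
  induction t generalizing n with
  | zero => simp [h]
  | succ t ih =>
    rw [Function.iterate_succ_apply']
    induction n with
    | zero =>
      simp only [sigmaSeq]
      symm
      apply Finset.sum_eq_zero
      intro i _
      rw [Nat.choose_eq_zero_of_lt (by omega)]; simp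
    | succ n ihn =>
      simp only [sigmaSeq]
      rw [ihn, ih, ← Finset.sum_add_distrib]
      refine Finset.sum_congr rfl fun i _ => ?_
      rw [show t + 1 + i = (t + i) + 1 by ring, Nat.choose_succ_succ]
      push_cast
      ring

lemma aux_regroup (F : ℕ → ℤ) (η t n : ℕ) :
    ∑ i ∈ Finset.range (t + 1), ∑ j ∈ Finset.range η, F j * (n.choose (i + j) : ℤ)
    = ∑ k ∈ Finset.range (t + η), (∑ j ∈ Finset.range η,
        if j ≤ k ∧ k ≤ t + j then F j else 0) * (n.choose k : ℤ) := by
  simp only [Finset.sum_mul]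
  rw [Finset.sum_comm, Finset.sum_comm (s := Finset.range (t + η))]
  refine Finset.sum_congr rfl fun j hj => ?_
  rw [Finset.mem_range] at hj
  simp only [ite_mul, zero_mul]
  rw [← Finset.sum_filter]
  refine Finset.sum_bij (fun i _ => i + j) ?_ ?_ ?_ ?_
  · intro i hi; simp at hi ⊢; omega
  · intro a _ b _ hab; omega
  · intro b hb
    simp at hb
    exact ⟨b - j, by simp; omega, by omega⟩
  · intros; rfl

/-- for a nonzero nilpotent sequence with leading component `e_γ`, for all
sufficiently large `t` the period of `∑_{i=0}^{t} Σ^i f` equals the period of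
`Σ^{t+γ}[e_γ]`. -/
theorem stmt12 (p l : ℕ) (hp : p.Prime) (hl : 1 ≤ l)
    (f : ℕ → ZMod (p ^ l)) (hf : IsPeriodicSeq f) (hf0 : f ≠ 0)
    (η : ℕ) (hη : 1 ≤ η) (hnil : deltaSeq^[η] f = 0)
    (hmin : ∀ k, 1 ≤ k → deltaSeq^[k] f = 0 → η ≤ k)
    (γ : ℕ) (hγη : γ < η)
    (hlead₁ : ∀ i < η, nuVal p (deltaSeq^[γ] f 0) ≤ nuVal p (deltaSeq^[i] f 0))
    (hlead₂ : ∀ i, γ < i → i < η → nuVal p (deltaSeq^[γ] f 0) < nuVal p (deltaSeq^[i] f 0)) :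
    ∃ T : ℕ, ∀ t : ℕ, T ≤ t →
      perSeq (∑ i ∈ Finset.range (t + 1), sigmaSeq^[i] f)
        = perSeq (sigmaSeq^[t + γ] (fun _ => deltaSeq^[γ] f 0)) := by
  have := Fact.mk hp
  have : NeZero (p ^ l) := ⟨pow_ne_zero _ hp.ne_zero⟩
  have hNewt := aux_newton f η hnil
  set e : ℕ → ZMod (p ^ l) := fun i => deltaSeq^[i] f 0 with he
  change ∀ i < η, nuVal p (e γ) ≤ nuVal p (e i) at hlead₁
  change ∀ i, γ < i → i < η → nuVal p (e γ) < nuVal p (e i) at hlead₂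
  change ∀ n, f n = ∑ i ∈ Finset.range η, e i * _ at hNewt
  change ∃ T : ℕ, ∀ t : ℕ, T ≤ t → _ = perSeq (sigmaSeq^[t + γ] (fun _ => e γ))
  clear_value e
  have hγ0 : e γ ≠ 0 := by
    intro h0
    apply hf0
    funext n
    rw [hNewt]
    apply Finset.sum_eq_zero
    intro i hi
    have := hlead₁ i (Finset.mem_range.1 hi)
    have h1 : e i = 0 := by
      by_contra hc
      simp [nuVal, h0, hc] at this
    simp [h1]
  have hv0 : (e γ).val ≠ 0 := by simpa [ZMod.val_eq_zero] using hγ0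
  set v := padicValNat p (e γ).val with hv
  have hnu : nuVal p (e γ) = v := by simp [nuVal, hγ0, hv]
  have hd1 : ∀ i < η, p ^ v ∣ (e i).val := by
    intro i hi
    by_cases h0 : e i = 0
    · simp [h0]
    have h1 := hlead₁ i hi
    rw [hnu] at h1
    simp only [nuVal, h0, if_false, Nat.cast_le] at h1
    have h00 : (e i).val ≠ 0 := by simpa [ZMod.val_eq_zero] using h0
    exact (padicValNat_dvd_iff_le h00).2 h1
  have hd2 : ∀ i, γ < i → i < η → p ^ (v + 1) ∣ (e i).val := by
    intro i hi hi2
    by_cases h0 : e i = 0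
    · simp [h0]
    have h1 := hlead₂ i hi hi2
    rw [hnu] at h1
    simp only [nuVal, h0, if_false, Nat.cast_lt] at h1
    have h00 : (e i).val ≠ 0 := by simpa [ZMod.val_eq_zero] using h0
    exact (padicValNat_dvd_iff_le h00).2 h1
  have hd3 : ¬ p ^ (v + 1) ∣ (e γ).val := by
    rw [padicValNat_dvd_iff_le hv0]; omega
  have hvl : v < l := by
    have h1 := Nat.le_of_dvd (Nat.pos_of_ne_zero hv0) (hd1 γ hγη)
    have h2 := ZMod.val_lt (e γ)
    exact (Nat.pow_lt_pow_iff_right hp.one_lt).1 (lt_of_le_of_lt h1 h2)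
  obtain ⟨m, hm⟩ : ∃ m, l = v + (m + 1) := ⟨l - v - 1, by omega⟩
  set F : ℕ → ℤ := fun i => (((e i).val / p ^ v : ℕ) : ℤ) with hF
  have hpv : 0 < p ^ v := Nat.pow_pos hp.pos
  have hF1 : ∀ i < η, e i = (((p : ℤ) ^ v * F i : ℤ) : ZMod (p ^ l)) := by
    intro i hi
    have : (p : ℤ) ^ v * F i = ((e i).val : ℤ) := by
      simp only [hF]
      exact_mod_cast Nat.mul_div_cancel' (hd1 i hi)
    rw [this]
    simp
  have hF2 : ∀ i, γ < i → i < η → (p : ℤ) ∣ F i := by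
    intro i hi hi2
    simp only [hF]
    norm_cast
    rw [Nat.dvd_div_iff_mul_dvd (hd1 i hi2), ← pow_succ]
    exact hd2 i hi hi2
  have hF3 : ¬ (p : ℤ) ∣ F γ := by
    simp only [hF]
    norm_cast
    rw [Nat.dvd_div_iff_mul_dvd (hd1 γ hγη), ← pow_succ]
    exact hd3
  clear_value F
  refine ⟨p * η, fun t ht => ?_⟩
  have hp2 := hp.two_le
  have htη : 2 * η ≤ t := le_trans (Nat.mul_le_mul_right _ hp2) ht
  set L := Nat.log p (t + γ) with hL
  have hs1 : p ^ L ≤ t + γ := Nat.pow_log_le_self _ (by omega)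
  have hs2 : t + γ < p ^ (L + 1) := Nat.lt_pow_succ_log_self hp.one_lt _
  clear_value L
  have hηL : η < p ^ L := by
    have : p * η < p * p ^ L := by rw [← pow_succ']; omega
    exact Nat.lt_of_mul_lt_mul_left this
  have hstep : 2 * p ^ L ≤ p ^ (L + 1) := by
    rw [pow_succ']; exact Nat.mul_le_mul_right _ hp2
  have hstep2 : 2 * p ^ (L + 1) ≤ p ^ (L + 2) := by
    rw [pow_succ' p (L + 1)]; exact Nat.mul_le_mul_right _ hp2
  rw [aux_main p l hp _ m v L (t + γ) (t + η)
    (fun k => ∑ j ∈ Finset.range η, if j ≤ k ∧ k ≤ t + j then F j else 0) hm hs1 hs2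
    (by omega) (by omega) (by omega) ?_ ?_ ?_,
    aux_main p l hp _ m v L (t + γ) (t + γ + 1)
    (fun k => if k = t + γ then F γ else 0) hm hs1 hs2
    (by omega) (by omega) (by omega) ?_ ?_ ?_]
  · simpa using hF3
  · intro k h1 h2; omega
  · intro n
    rw [aux_sigma_s12 (fun _ => e γ) 1 (fun _ => e γ) (by simp), Finset.sum_range_one,
      Finset.sum_eq_single (t + γ)]
    · rw [hF1 γ hγη]; push_cast; simp [mul_assoc]
    · intro b _ hb; simp [hb]
    · simp
  · intro hd
    apply hF3
    rw [← Finset.add_sum_erase _ _ (Finset.mem_range.2 hγη), if_pos (by omega)] at hd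
    refine (dvd_add_left (Finset.dvd_sum ?_)).1 hd
    intro j hj
    simp only [Finset.mem_erase, Finset.mem_range] at hj
    split_ifs with h
    · exact hF2 j (by omega) hj.2
    · exact dvd_zero _
  · intro k hk1 hk2
    refine Finset.dvd_sum fun j hj => ?_
    rw [Finset.mem_range] at hj
    split_ifs with h
    · exact hF2 j (by omega) hj
    · exact dvd_zero _
  · intro n
    rw [← aux_regroup, Finset.sum_apply]
    push_cast
    rw [Finset.mul_sum]
    refine Finset.sum_congr rfl fun i _ => ?_
    rw [aux_sigma_s12 f η e hNewt, Finset.mul_sum]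
    refine Finset.sum_congr rfl fun j hj => ?_
    rw [hF1 j (Finset.mem_range.1 hj)]
    push_cast
    ring
end

section
/- Let p be a prime and ℓ = 1, i.e. consider sequences over the field Z_p. Let f be a nonzero nilpotent periodic sequence in Z_p of nilpotency index η with generating vector (e_0, …, e_{η−1}). Then the leading component of f is e_{η−1}, and for every s ≥ 0 the period of Σ^s f equals the period of Σ^{s+η−1}[e_{η−1}]. -/
def deltaLin (p : ℕ) : Module.End (ZMod p) (ℕ → ZMod p) where
  toFun := deltaSeq
  map_add' f g := by funext n; simp only [deltaSeq, Pi.add_apply]; ring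
  map_smul' c f := by
    funext n; simp only [deltaSeq, Pi.smul_apply, smul_eq_mul, RingHom.id_apply]; ring

lemma shift_iter {p : ℕ} (j : ℕ) (f : ℕ → ZMod p) : shiftSeq^[j] f = fun n => f (n + j) := by
  induction j generalizing f with
  | zero => rfl
  | succ j ih =>
    rw [Function.iterate_succ_apply, ih]
    funext n
    simp only [shiftSeq]
    congr 1

lemma periodic_iff_pt {p : ℕ} (j : ℕ) (f : ℕ → ZMod p) :
    Function.Periodic f j ↔ Function.IsPeriodicPt shiftSeq j f := by
  unfold Function.IsPeriodicPt Function.IsFixedPt Function.Periodic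
  rw [shift_iter, funext_iff]

lemma shift_pow_prime {p : ℕ} (hp : p.Prime) (t : ℕ) (f : ℕ → ZMod p) :
    shiftSeq^[p ^ t] f = f + deltaSeq^[p ^ t] f := by
  haveI := Fact.mk hp
  have h1 : ((1 + Polynomial.X : Polynomial (ZMod p)) ^ (p ^ t)) = 1 + Polynomial.X ^ (p ^ t) := by
    rw [add_pow_char_pow, one_pow]
  have h2 := congrArg (Polynomial.aeval (deltaLin p)) h1
  simp only [map_pow, map_add, map_one, Polynomial.aeval_X] at h2
  have h3 := LinearMap.congr_fun h2 f
  rw [LinearMap.add_apply, Module.End.pow_apply, Module.End.pow_apply] at h3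
  have e1 : (⇑(1 + deltaLin p) : (ℕ → ZMod p) → (ℕ → ZMod p)) = shiftSeq := by
    funext g n
    simp [deltaLin, deltaSeq, shiftSeq]
  rw [e1] at h3
  exact h3

lemma pt_pow_iff {p : ℕ} (hp : p.Prime) (t : ℕ) (f : ℕ → ZMod p) :
    Function.IsPeriodicPt shiftSeq (p ^ t) f ↔ deltaSeq^[p ^ t] f = 0 := by
  unfold Function.IsPeriodicPt Function.IsFixedPt
  rw [shift_pow_prime hp, add_eq_left]

lemma delta_zero_iter {p : ℕ} (k : ℕ) : deltaSeq^[k] (0 : ℕ → ZMod p) = 0 := by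
  induction k with
  | zero => rfl
  | succ k ih =>
    rw [Function.iterate_succ_apply', ih]
    funext n
    simp [deltaSeq]

lemma delta_mono {p : ℕ} {f : ℕ → ZMod p} {a b : ℕ} (hab : a ≤ b) (h : deltaSeq^[a] f = 0) :
    deltaSeq^[b] f = 0 := by
  obtain ⟨c, rfl⟩ := Nat.exists_eq_add_of_le' hab
  rw [Function.iterate_add_apply, h, delta_zero_iter]

lemma delta_iff {p : ℕ} {f : ℕ → ZMod p} {m : ℕ} (h : deltaSeq^[m + 1] f = 0)
    (h' : deltaSeq^[m] f ≠ 0) (k : ℕ) : deltaSeq^[k] f = 0 ↔ m < k := by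
  constructor
  · intro hk
    by_contra hlt
    exact h' (delta_mono (not_lt.mp hlt) hk)
  · intro hk
    exact delta_mono hk h

lemma periodic_imp {p : ℕ} (hp : p.Prime) {f g : ℕ → ZMod p} {m : ℕ}
    (hf : deltaSeq^[m + 1] f = 0) (hf' : deltaSeq^[m] f ≠ 0)
    (hg : deltaSeq^[m + 1] g = 0) (j : ℕ)
    (h : Function.Periodic f j) : Function.Periodic g j := by
  rw [periodic_iff_pt] at h ⊢
  have hN : m + 1 ≤ p ^ (m + 1) := (Nat.lt_pow_self hp.one_lt).le
  have h1 := (pt_pow_iff hp (m + 1) f).2 (delta_mono hN hf)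
  have h2 := h.gcd h1
  obtain ⟨k, -, hk⟩ := (Nat.dvd_prime_pow hp).1 (Nat.gcd_dvd_right j (p ^ (m + 1)))
  rw [hk, pt_pow_iff hp, delta_iff hf hf'] at h2
  have h3 := (pt_pow_iff hp k g).2 (delta_mono h2 hg)
  exact h3.trans_dvd (hk ▸ Nat.gcd_dvd_left j (p ^ (m + 1)))

lemma per_eq {p : ℕ} (hp : p.Prime) {f g : ℕ → ZMod p} {m : ℕ}
    (hf : deltaSeq^[m + 1] f = 0) (hf' : deltaSeq^[m] f ≠ 0)
    (hg : deltaSeq^[m + 1] g = 0) (hg' : deltaSeq^[m] g ≠ 0) : perSeq f = perSeq g := by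
  unfold perSeq
  congr 1
  ext j
  exact and_congr_right fun _ =>
    ⟨periodic_imp hp hf hf' hg j, periodic_imp hp hg hg' hf j⟩

lemma delta_sigma {p : ℕ} (s : ℕ) (f : ℕ → ZMod p) : deltaSeq^[s] (sigmaSeq^[s] f) = f := by
  have h : Function.LeftInverse (deltaSeq (M := p)) sigmaSeq := by
    intro f
    funext n
    simp [deltaSeq, sigmaSeq]
  exact h.iterate s f

lemma delta_sigma_add {p : ℕ} (k s : ℕ) (f : ℕ → ZMod p) :
    deltaSeq^[k + s] (sigmaSeq^[s] f) = deltaSeq^[k] f := by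
  rw [Function.iterate_add_apply, delta_sigma]

/-- over `Z_p`, the leading component of a nonzero nilpotent sequence of
index `η` is `e_{η-1}` (it is nonzero), and `τ(Σ^s f) = τ(Σ^{s+η-1}[e_{η-1}])` for every
`s ≥ 0`. -/
theorem stmt13 (p : ℕ) (hp : p.Prime)
    (f : ℕ → ZMod p) (hf : IsPeriodicSeq f) (hf0 : f ≠ 0)
    (η : ℕ) (hη : 1 ≤ η) (hnil : deltaSeq^[η] f = 0)
    (hmin : ∀ k, 1 ≤ k → deltaSeq^[k] f = 0 → η ≤ k) :
    deltaSeq^[η - 1] f 0 ≠ 0 ∧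
    (∀ i < η, nuVal p (deltaSeq^[η - 1] f 0) ≤ nuVal p (deltaSeq^[i] f 0)) ∧
    ∀ s : ℕ, perSeq (sigmaSeq^[s] f)
      = perSeq (sigmaSeq^[s + (η - 1)] (fun _ => deltaSeq^[η - 1] f 0)) := by
  obtain ⟨m, rfl⟩ := Nat.exists_eq_add_of_le' hη
  simp only [Nat.add_sub_cancel]
  have hm : deltaSeq^[m] f ≠ 0 := by
    intro h
    rcases Nat.eq_zero_or_pos m with rfl | hpos
    · exact hf0 h
    · have := hmin m hpos h
      omega
  have hconst : ∀ n, deltaSeq^[m] f n = deltaSeq^[m] f 0 := by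
    intro n
    induction n with
    | zero => rfl
    | succ n ih =>
      have h := congrFun hnil n
      rw [Function.iterate_succ_apply'] at h
      simp only [deltaSeq, Pi.zero_apply] at h
      rw [← ih]
      exact sub_eq_zero.1 h
  have h0 : deltaSeq^[m] f 0 ≠ 0 := by
    intro h
    apply hm
    funext n
    rw [hconst, h]
    rfl
  refine ⟨h0, ?_, ?_⟩
  · intro i _
    haveI := Fact.mk hp
    have : nuVal p (deltaSeq^[m] f 0) = 0 := by
      unfold nuVal
      rw [if_neg h0, padicValNat.eq_zero_of_not_dvd]
      · rfl
      · intro hd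
        have h1 := ZMod.val_lt (deltaSeq^[m] f 0)
        have h2 := Nat.eq_zero_of_dvd_of_lt hd h1
        exact h0 ((ZMod.val_eq_zero _).1 h2)
    rw [this]
    exact zero_le
  · intro s
    generalize hc : deltaSeq^[m] f 0 = c at *
    have hc' : (fun _ : ℕ => c) ≠ 0 := fun h => h0 (congrFun h 0)
    apply per_eq hp (m := m + s)
    · rw [show m + s + 1 = (m + 1) + s by omega, delta_sigma_add, hnil]
    · rw [delta_sigma_add]; exact hm
    · rw [show m + s + 1 = 1 + (s + m) by omega, delta_sigma_add]
      funext n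
      simp [deltaSeq]
    · rw [show m + s = 0 + (s + m) by omega, delta_sigma_add]
      exact hc'
end

section
/- Let p be a prime, ℓ ≥ 1, and let f be an idempotent periodic sequence in Z_{p^ℓ} with idempotency index η and generating vector (e_0, …, e_{η−1}). For every s ≥ 1, Σ^s f = Δ^{r} f − ∑_{j=0}^{s−1} Σ^j [e_{q_j}], where r is the remainder of −s modulo η (0 ≤ r < η) and q_j is the remainder of j − s modulo η. This exhibits the decomposition of Σ^s f into idempotent part Δ^r f and nilpotent part −∑_{j=0}^{s−1} Σ^j [e_{q_j}]. -/
theorem aux_delta_sub {M : ℕ} (a b : ℕ → ZMod M) : deltaSeq (a - b) = deltaSeq a - deltaSeq b := by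
  funext n; simp only [deltaSeq, Pi.sub_apply]; ring

theorem aux_sigma_sub {M : ℕ} (a b : ℕ → ZMod M) : sigmaSeq (a - b) = sigmaSeq a - sigmaSeq b := by
  funext n
  induction n with
  | zero => simp [sigmaSeq]
  | succ n ih =>
    simp only [sigmaSeq, Pi.sub_apply] at ih ⊢
    rw [ih]; ring

/-- delta as an additive hom -/
def auxD (M : ℕ) : (ℕ → ZMod M) →+ (ℕ → ZMod M) :=
  AddMonoidHom.ofMapSub deltaSeq aux_delta_sub

/-- sigma as an additive hom -/
def auxS (M : ℕ) : (ℕ → ZMod M) →+ (ℕ → ZMod M) :=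
  AddMonoidHom.ofMapSub sigmaSeq aux_sigma_sub

theorem aux_sigma_sum {M : ℕ} (s : ℕ) (F : ℕ → ℕ → ZMod M) :
    sigmaSeq (∑ j ∈ Finset.range s, F j) = ∑ j ∈ Finset.range s, sigmaSeq (F j) :=
  map_sum (auxS M) F (Finset.range s)

theorem aux_delta_sum {M : ℕ} (s : ℕ) (F : ℕ → ℕ → ZMod M) :
    deltaSeq (∑ j ∈ Finset.range s, F j) = ∑ j ∈ Finset.range s, deltaSeq (F j) :=
  map_sum (auxD M) F (Finset.range s)

theorem aux_delta_neg {M : ℕ} (a : ℕ → ZMod M) : deltaSeq (-a) = -deltaSeq a :=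
  map_neg (auxD M) a

theorem aux_delta_zero {M : ℕ} : deltaSeq (0 : ℕ → ZMod M) = 0 :=
  map_zero (auxD M)

theorem aux_delta_sigma {M : ℕ} (a : ℕ → ZMod M) : deltaSeq (sigmaSeq a) = a := by
  funext n; simp [deltaSeq, sigmaSeq]

theorem aux_sigma_delta {M : ℕ} (a : ℕ → ZMod M) :
    sigmaSeq (deltaSeq a) = a - (fun _ => a 0) := by
  funext n
  induction n with
  | zero => simp [sigmaSeq]
  | succ n ih =>
    simp only [sigmaSeq, Pi.sub_apply, deltaSeq] at ih ⊢
    rw [ih]; ring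

theorem aux_iter_zero {M : ℕ} (k : ℕ) : deltaSeq^[k] (0 : ℕ → ZMod M) = 0 :=
  Function.iterate_fixed aux_delta_zero k

theorem aux_delta_const {M : ℕ} (c : ZMod M) : deltaSeq (fun _ => c) = 0 := by
  funext n; simp [deltaSeq]

theorem aux_nil {M : ℕ} (c : ZMod M) (j s : ℕ) (h : j < s) :
    deltaSeq^[s] (sigmaSeq^[j] (fun _ => c)) = 0 := by
  obtain ⟨k, rfl⟩ : ∃ k, s = k + 1 + j := ⟨s - j - 1, by omega⟩
  rw [Function.iterate_add_apply,
    (Function.LeftInverse.iterate (f := sigmaSeq) (g := deltaSeq) aux_delta_sigma j) _,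
    Function.iterate_succ_apply, aux_delta_const, aux_iter_zero]

theorem aux_nil_sum {M : ℕ} (k s : ℕ) (F : ℕ → ℕ → ZMod M) :
    deltaSeq^[k] (-∑ j ∈ Finset.range s, F j) = -∑ j ∈ Finset.range s, deltaSeq^[k] (F j) := by
  induction k with
  | zero => rfl
  | succ k ih =>
    simp only [Function.iterate_succ_apply', ih, aux_delta_neg, aux_delta_sum]

theorem aux_step {M : ℕ} (f : ℕ → ZMod M) (η : ℕ) (hη : 1 ≤ η) (hidem : deltaSeq^[η] f = f)
    (k : ℤ) : deltaSeq (deltaSeq^[(k % (η : ℤ)).toNat] f)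
      = deltaSeq^[((k + 1) % (η : ℤ)).toNat] f := by
  rw [← Function.iterate_succ_apply' deltaSeq]
  have h0 := Int.emod_nonneg k (b := (η : ℤ)) (by omega)
  have h1 := Int.emod_lt_of_pos k (b := (η : ℤ)) (by omega)
  have h2 : (k + 1) % (η : ℤ) = (k % (η : ℤ) + 1) % (η : ℤ) := by simp
  rw [h2]
  by_cases h : k % (η : ℤ) + 1 = η
  · rw [h, Int.emod_self, show (k % (η : ℤ)).toNat.succ = η by omega, hidem]; rfl
  · rw [Int.emod_eq_of_lt (a := k % (η : ℤ) + 1) (by omega) (by omega)]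
    congr 2; omega

theorem aux_main_s14 {M : ℕ} (f : ℕ → ZMod M) (η : ℕ) (hη : 1 ≤ η) (hidem : deltaSeq^[η] f = f)
    (s : ℕ) : sigmaSeq^[s] f
        = deltaSeq^[((-(s : ℤ)) % (η : ℤ)).toNat] f
          - ∑ j ∈ Finset.range s,
              sigmaSeq^[j] (fun _ => deltaSeq^[(((j : ℤ) - (s : ℤ)) % (η : ℤ)).toNat] f 0) := by
  induction s with
  | zero => simp
  | succ s ih =>
    rw [Function.iterate_succ_apply', ih, aux_sigma_sub, aux_sigma_sum, Finset.sum_range_succ']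
    have h := aux_step f η hη hidem (-((s + 1 : ℕ) : ℤ))
    rw [show -((s + 1 : ℕ) : ℤ) + 1 = -(s : ℤ) by push_cast; ring] at h
    rw [← h, aux_sigma_delta]
    have e : ∀ j : ℕ, (((j + 1 : ℕ) : ℤ) - ((s + 1 : ℕ) : ℤ)) = (j : ℤ) - s := by
      intro j; push_cast; ring
    simp only [e, Function.iterate_succ_apply', Function.iterate_zero, id_eq]
    rw [show ((0 : ℕ) : ℤ) - ((s + 1 : ℕ) : ℤ) = -((s + 1 : ℕ) : ℤ) by push_cast; ring]
    abel

/-- for idempotent `f` of index `η` and `s ≥ 1`,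
`Σ^s f = Δ^{(-s) mod η} f - ∑_{j<s} Σ^j [e_{(j-s) mod η}]`, and this is the decomposition
of `Σ^s f` into idempotent and nilpotent parts. -/
theorem stmt14 (p l : ℕ) (hp : p.Prime) (hl : 1 ≤ l)
    (f : ℕ → ZMod (p ^ l)) (hf : IsPeriodicSeq f)
    (η : ℕ) (hη : 1 ≤ η) (hidem : deltaSeq^[η] f = f)
    (hmin : ∀ k, 1 ≤ k → deltaSeq^[k] f = f → η ≤ k)
    (s : ℕ) (hs : 1 ≤ s) :
    sigmaSeq^[s] f
        = deltaSeq^[((-(s : ℤ)) % (η : ℤ)).toNat] f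
          - ∑ j ∈ Finset.range s,
              sigmaSeq^[j] (fun _ => deltaSeq^[(((j : ℤ) - (s : ℤ)) % (η : ℤ)).toNat] f 0) ∧
    IsIdempotentSeq (deltaSeq^[((-(s : ℤ)) % (η : ℤ)).toNat] f) ∧
    IsNilpotentSeq (- ∑ j ∈ Finset.range s,
        sigmaSeq^[j] (fun _ => deltaSeq^[(((j : ℤ) - (s : ℤ)) % (η : ℤ)).toNat] f 0)) := by
  refine ⟨aux_main_s14 f η hη hidem s, ⟨η, hη, ?_⟩, ⟨s, hs, ?_⟩⟩
  · rw [← Function.iterate_add_apply, Nat.add_comm, Function.iterate_add_apply, hidem]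
  · rw [aux_nil_sum, Finset.sum_eq_zero, neg_zero]
    intro j hj
    exact aux_nil _ _ _ (Finset.mem_range.mp hj)
end
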